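/- For every m ≥ 1 and r > 0 there exists a family of linear operators S_{t,r} : C^∞_0(B̄_r) → C^∞_0(B̄_r), indexed by t ≥ 1, such that for all n, k, l ∈ ℕ there are constants C = C(n,k,l,r) > 0 with, for all f ∈ C^∞_0(B̄_r) and all t ≥ 1: ⟨S_{t,r}(f)⟩_{n+l,k,r} ≤ C · t^l · ⟨f⟩_{n,k+2l,r} and ⟨(S_{t,r} − id)(f)⟩_{n,k+2l,r} ≤ C · t^{-l} · ⟨f⟩_{n+l,k,r}. -/

import Mathlib

open Metric Set

/-- Membership in `C^∞₀(B̄_r)`: smooth on the closed ball and flat at the origin. -/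
def FlatSmoothOnBall (m : ℕ) (r : ℝ) (f : EuclideanSpace ℝ (Fin m) → ℝ) : Prop :=
  ContDiffOn ℝ (⊤ : ℕ∞) f (closedBall 0 r) ∧
    ∀ i : ℕ, iteratedFDerivWithin ℝ i f (closedBall 0 r) 0 = 0

/-- The weighted norm `⟨f⟩_{n,k,r}` on flat functions on the closed ball. -/
noncomputable def flatNorm (m : ℕ) (r : ℝ) (n k : ℕ)
    (f : EuclideanSpace ℝ (Fin m) → ℝ) : ℝ :=
  ⨆ p : (closedBall (0 : EuclideanSpace ℝ (Fin m)) r \ {0} :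
      Set (EuclideanSpace ℝ (Fin m))) × Fin (n + 1),
    ‖(p.1 : EuclideanSpace ℝ (Fin m))‖ ^ (-(k : ℤ)) *
      ‖iteratedFDerivWithin ℝ p.2 f (closedBall 0 r) p.1‖

/-!
Moving `x` towards `z` by the proportion `1 - exp (-μ ‖x‖²)` displaces it by `O(μ ‖x‖²)`. Averaging
`f` over the points so obtained, with a bump density in `z`, therefore smooths at a scale that
degenerates quadratically at the origin, and preserves flatness there. Around a given point a change
of variables makes the sample points constant, so that derivatives fall on the density instead of
`f`; each of them costs a factor `(1 - exp (-μ ‖x‖²))⁻¹ ≲ (1 + μ⁻¹) ‖x‖⁻²`, so gaining `l`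
derivatives costs `2 l` powers of `‖x‖` and `μ⁻¹ ^ l`. By Taylor expansion the average at scale `μ`
has an expansion in powers of `μ` whose constant term is `f`. Superposing the scales `2 ^ k / t`
with rapidly decreasing weights of total mass one and vanishing higher moments cancels the
intermediate terms of this expansion and leaves an error of order `t⁻¹ ^ l ‖x‖ ^ (2 l)`.
-/

namespace FlatSmoothing

open Filter Topology MeasureTheory Function
open scoped ContDiff Nat

variable {E F G : Type*} [NormedAddCommGroup E] [NormedSpace ℝ E]
  [NormedAddCommGroup F] [NormedSpace ℝ F] [NormedAddCommGroup G] [NormedSpace ℝ G]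

/-! ### Scaled bounds on derivatives -/

/-- Scale-`M` control of a germ: `f` is `C^n` at `x` and its `i`-th derivative there has norm at
most `A * M ^ i` for every `i ≤ n`. -/
structure HasDerivBound (f : E → F) (x : E) (n : ℕ) (A M : ℝ) : Prop where
  contDiffAt : ContDiffAt ℝ n f x
  norm_le : ∀ i ≤ n, ‖iteratedFDeriv ℝ i f x‖ ≤ A * M ^ i

namespace HasDerivBound

variable {f : E → F} {x : E} {n : ℕ} {A B C M N : ℝ}

lemma nonneg (h : HasDerivBound f x n A M) : 0 ≤ A := by
  simpa using (norm_nonneg _).trans (h.norm_le 0 n.zero_le)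

lemma of_le {i : ℕ} (h : HasDerivBound f x n A M) (hi : i ≤ n) : HasDerivBound f x i A M :=
  ⟨h.contDiffAt.of_le (by exact_mod_cast hi), fun j hj => h.norm_le j (hj.trans hi)⟩

lemma mono (h : HasDerivBound f x n A M) (hAB : A ≤ B) (hM : 0 ≤ M) (hMN : M ≤ N) :
    HasDerivBound f x n B N := by
  have hB := h.nonneg.trans hAB
  exact ⟨h.contDiffAt, fun i hi => (h.norm_le i hi).trans (by gcongr)⟩

lemma congr {g : E → F} (h : HasDerivBound f x n A M) (hfg : g =ᶠ[𝓝 x] f) :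
    HasDerivBound g x n A M :=
  ⟨h.contDiffAt.congr_of_eventuallyEq hfg, fun i hi => by
    rw [(hfg.iteratedFDeriv (𝕜 := ℝ) i).self_of_nhds]; exact h.norm_le i hi⟩

lemma const_smul (h : HasDerivBound f x n A M) (c : ℝ) :
    HasDerivBound (fun y => c • f y) x n (|c| * A) M := by
  refine ⟨h.contDiffAt.const_smul c, fun i hi => ?_⟩
  rw [iteratedFDeriv_const_smul_apply' (h.contDiffAt.of_le (by exact_mod_cast hi)), norm_smul,
    mul_assoc]
  exact mul_le_mul_of_nonneg_left (h.norm_le i hi) (abs_nonneg c)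

lemma sum {ι : Type*} {s : Finset ι} {f : ι → E → F} {A : ι → ℝ}
    (h : ∀ j ∈ s, HasDerivBound (f j) x n (A j) M) :
    HasDerivBound (fun y => ∑ j ∈ s, f j y) x n (∑ j ∈ s, A j) M := by
  refine ⟨ContDiffAt.sum fun j hj => (h j hj).contDiffAt, fun i hi => ?_⟩
  rw [iteratedFDeriv_fun_sum_apply fun j hj => (h j hj).contDiffAt.of_le (by exact_mod_cast hi),
    Finset.sum_mul]
  exact norm_sum_le_of_le _ fun j hj => (h j hj).norm_le i hi

lemma add {g : E → F} (hf : HasDerivBound f x n A M) (hg : HasDerivBound g x n B M) :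
    HasDerivBound (fun y => f y + g y) x n (A + B) M := by
  refine ⟨hf.contDiffAt.add hg.contDiffAt, fun i hi => ?_⟩
  have hi' : (i : WithTop ℕ∞) ≤ n := by exact_mod_cast hi
  rw [← Pi.add_def, iteratedFDeriv_add_apply (hf.contDiffAt.of_le hi') (hg.contDiffAt.of_le hi'),
    add_mul]
  exact norm_add_le_of_le (hf.norm_le i hi) (hg.norm_le i hi)

lemma const (x : E) (n : ℕ) (hM : 0 ≤ M) (c : F) : HasDerivBound (fun _ : E => c) x n ‖c‖ M := by
  refine ⟨contDiffAt_const, fun i _ => ?_⟩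
  rcases i.eq_zero_or_pos with rfl | hi
  · simp
  · rw [iteratedFDeriv_const_of_ne hi.ne']
    simp only [Pi.zero_apply, norm_zero]
    positivity

lemma add_const (h : HasDerivBound f x n A M) (hM : 0 ≤ M) (c : F) :
    HasDerivBound (fun y => f y + c) x n (A + ‖c‖) M :=
  h.add (const x n hM c)

end HasDerivBound

lemma exists_isOpen_contDiffOn {f : E → F} {x : E} {n : ℕ} (hf : ContDiffAt ℝ n f x) :
    ∃ u, IsOpen u ∧ x ∈ u ∧ ContDiffOn ℝ n f u := by
  obtain ⟨u, hu, huo, hxu⟩ := _root_.eventually_nhds_iff.1 (hf.eventually (by simp))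
  exact ⟨u, huo, hxu, fun y hy => (hu y hy).contDiffWithinAt⟩

lemma norm_iteratedFDeriv_smul_le_of_contDiffAt {f : E → ℝ} {g : E → F} {x : E} {n : ℕ}
    (hf : ContDiffAt ℝ n f x) (hg : ContDiffAt ℝ n g x) :
    ‖iteratedFDeriv ℝ n (fun y => f y • g y) x‖ ≤ ∑ i ∈ Finset.range (n + 1),
      (n.choose i : ℝ) * ‖iteratedFDeriv ℝ i f x‖ * ‖iteratedFDeriv ℝ (n - i) g x‖ := by
  obtain ⟨s, hso, hxs, hfs⟩ := exists_isOpen_contDiffOn hf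
  obtain ⟨t, hto, hxt, hgt⟩ := exists_isOpen_contDiffOn hg
  have ho := hso.inter hto
  have hx : x ∈ s ∩ t := ⟨hxs, hxt⟩
  simpa only [iteratedFDerivWithin_of_isOpen _ ho hx] using norm_iteratedFDerivWithin_smul_le
    (hfs.mono inter_subset_left) (hgt.mono inter_subset_right) ho.uniqueDiffOn hx le_rfl

lemma norm_iteratedFDeriv_comp_le_of_contDiffAt {f : E → F} {g : F → G} {x : E} {n : ℕ} {C D : ℝ}
    (hg : ContDiffAt ℝ n g (f x)) (hf : ContDiffAt ℝ n f x)
    (hC : ∀ i ≤ n, ‖iteratedFDeriv ℝ i g (f x)‖ ≤ C)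
    (hD : ∀ i, 1 ≤ i → i ≤ n → ‖iteratedFDeriv ℝ i f x‖ ≤ D ^ i) :
    ‖iteratedFDeriv ℝ n (fun y => g (f y)) x‖ ≤ n ! * C * D ^ n := by
  obtain ⟨t, hto, hxt, hgt⟩ := exists_isOpen_contDiffOn hg
  obtain ⟨s, hso, hxs, hfs⟩ := exists_isOpen_contDiffOn hf
  have ho : IsOpen (s ∩ f ⁻¹' t) := hfs.continuousOn.isOpen_inter_preimage hso hto
  have hx : x ∈ s ∩ f ⁻¹' t := ⟨hxs, hxt⟩
  have key := norm_iteratedFDerivWithin_comp_le (n := n) (C := C) (D := D) hgt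
    (hfs.mono inter_subset_left) le_rfl hto.uniqueDiffOn ho.uniqueDiffOn (fun y hy => hy.2) hx
  simp only [iteratedFDerivWithin_of_isOpen _ ho hx, iteratedFDerivWithin_of_isOpen _ hto hxt]
    at key
  exact key hC hD

namespace HasDerivBound

variable {f : E → F} {x : E} {n : ℕ} {A B C M : ℝ}

lemma smul {f : E → ℝ} {g : E → F} (hf : HasDerivBound f x n A M) (hg : HasDerivBound g x n B M)
    (hM : 0 ≤ M) : HasDerivBound (fun y => f y • g y) x n (2 ^ n * (A * B)) M := by
  have hA := hf.nonneg
  have hB := hg.nonneg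
  refine ⟨hf.contDiffAt.smul hg.contDiffAt, fun i hi => ?_⟩
  calc ‖iteratedFDeriv ℝ i (fun y => f y • g y) x‖
      ≤ ∑ j ∈ Finset.range (i + 1), (i.choose j : ℝ) * ‖iteratedFDeriv ℝ j f x‖ *
          ‖iteratedFDeriv ℝ (i - j) g x‖ :=
        norm_iteratedFDeriv_smul_le_of_contDiffAt (hf.of_le hi).contDiffAt (hg.of_le hi).contDiffAt
    _ ≤ ∑ j ∈ Finset.range (i + 1), (i.choose j : ℝ) * (A * B * M ^ i) := by
        refine Finset.sum_le_sum fun j hj => ?_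
        have hji : j ≤ i := Nat.lt_succ_iff.1 (Finset.mem_range.1 hj)
        rw [mul_assoc, ← Nat.add_sub_cancel' hji, pow_add, mul_mul_mul_comm A B,
          Nat.add_sub_cancel' hji]
        gcongr
        · exact hf.norm_le j (hji.trans hi)
        · exact hg.norm_le (i - j) ((Nat.sub_le _ _).trans hi)
    _ = 2 ^ i * (A * B) * M ^ i := by
        rw [← Finset.sum_mul, ← Nat.cast_sum, Nat.sum_range_choose]
        push_cast
        ring
    _ ≤ 2 ^ n * (A * B) * M ^ i := by gcongr; norm_num

lemma comp {g : F → G} (hg : HasDerivBound g (f x) n C 1) (hf : HasDerivBound f x n A M)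
    (hA : 1 ≤ A) (hM : 0 ≤ M) :
    HasDerivBound (fun y => g (f y)) x n (n ! * C) (A * M) := by
  have hC := hg.nonneg
  refine ⟨hg.contDiffAt.comp x hf.contDiffAt, fun i hi => ?_⟩
  refine (norm_iteratedFDeriv_comp_le_of_contDiffAt (C := C) (D := A * M) (hg.of_le hi).contDiffAt
    (hf.of_le hi).contDiffAt (fun j hj => by simpa using hg.norm_le j (hj.trans hi))
    fun j hj hji => ?_).trans ?_
  · calc ‖iteratedFDeriv ℝ j f x‖ ≤ A * M ^ j := hf.norm_le j (hji.trans hi)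
      _ ≤ A ^ j * M ^ j := by gcongr; exact le_self_pow₀ hA (by omega)
      _ = (A * M) ^ j := (mul_pow _ _ _).symm
  · gcongr

end HasDerivBound

lemma exists_hasDerivBound {f : E → F} {U K : Set E} (hU : IsOpen U) (hf : ContDiffOn ℝ ∞ f U)
    (hK : IsCompact K) (hKU : K ⊆ U) (n : ℕ) :
    ∃ C, 1 ≤ C ∧ ∀ x ∈ K, HasDerivBound f x n C 1 := by
  have bound (i : ℕ) : ∃ C, ∀ x ∈ K, ‖iteratedFDeriv ℝ i f x‖ ≤ C := by
    refine hK.exists_bound_of_continuousOn (((hf.continuousOn_iteratedFDerivWithin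
      (by exact_mod_cast le_top) hU.uniqueDiffOn).mono hKU).congr fun x hx => ?_)
    rw [iteratedFDerivWithin_of_isOpen i hU (hKU hx)]
  choose C hC using bound
  refine ⟨1 + ∑ i ∈ Finset.range (n + 1), |C i|, le_add_of_nonneg_right (by positivity),
    fun x hx => ⟨((hf x (hKU hx)).contDiffAt (hU.mem_nhds (hKU hx))).of_le
      (by exact_mod_cast le_top), fun i hi => ?_⟩⟩
  rw [one_pow, mul_one]
  calc ‖iteratedFDeriv ℝ i f x‖ ≤ |C i| := (hC i x hx).trans (le_abs_self _)
    _ ≤ ∑ i ∈ Finset.range (n + 1), |C i| :=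
        Finset.single_le_sum (f := fun i => |C i|) (fun _ _ => abs_nonneg _)
          (Finset.mem_range.2 (by omega))
    _ ≤ _ := le_add_of_nonneg_left zero_le_one

/-! ### Taylor expansion -/

lemma iteratedFDeriv_add_two_apply {f : E → F} {x : E} {n : ℕ}
    (hf : ContDiffAt ℝ (n + 2 : ℕ) f x) (w : Fin (n + 2) → E) :
    iteratedFDeriv ℝ (n + 2) f x w =
      fderiv ℝ (fderiv ℝ fun y => iteratedFDeriv ℝ n f y (Fin.tail (Fin.tail w))) x
        (w 0) (w 1) := by
  have hdiff {k : ℕ} (hk : k < n + 2) : ∀ᶠ y in 𝓝 x, DifferentiableAt ℝ (iteratedFDeriv ℝ k f) y :=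
    (hf.eventually (ENat.natCast_ne_coe_top _)).mono fun y hy =>
      hy.differentiableAt_iteratedFDeriv (by exact_mod_cast hk)
  have hsmooth : ContDiffAt ℝ 2 (fun y => iteratedFDeriv ℝ n f y (Fin.tail (Fin.tail w))) x :=
    (ContinuousMultilinearMap.apply ℝ (fun _ : Fin n => E) F
      (Fin.tail (Fin.tail w))).contDiff.contDiffAt.comp x
        (hf.iteratedFDeriv_right (by exact_mod_cast (add_comm 2 n).le))
  rw [(hdiff (Nat.lt_succ_self _)).self_of_nhds.iteratedFDeriv_succ_apply_left',
    Filter.EventuallyEq.fderiv_eq ((hdiff (by omega : n < n + 2)).mono fun y hy =>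
      hy.iteratedFDeriv_succ_apply_left'),
    ((hsmooth.fderiv_right (m := 1) (by norm_num)).differentiableAt
      (by norm_num)).hasFDerivAt.clm_apply (hasFDerivAt_const _ x) |>.fderiv]
  simp [Fin.tail]

lemma iteratedFDeriv_comp_swap {n : ℕ} : ∀ {f : E → F} {x : E}
    (_ : ContDiffAt ℝ (n + 1 : ℕ) f x) (i : Fin n) (v : Fin (n + 1) → E),
    iteratedFDeriv ℝ (n + 1) f x (v ∘ Equiv.swap i.castSucc i.succ) =
      iteratedFDeriv ℝ (n + 1) f x v := by
  induction n with
  | zero => exact fun _ i => i.elim0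
  | succ n ih =>
    intro f x hf i v
    set w := v ∘ Equiv.swap i.castSucc i.succ with hw
    induction i using Fin.cases with
    | zero =>
      have tail : Fin.tail (Fin.tail w) = Fin.tail (Fin.tail v) := by
        ext k
        simp only [hw, Fin.tail, comp_apply]
        rw [Equiv.swap_apply_of_ne_of_ne] <;> simp [Fin.ext_iff]
      have hsmooth : ContDiffAt ℝ 2 (fun y => iteratedFDeriv ℝ n f y (Fin.tail (Fin.tail v))) x :=
        (ContinuousMultilinearMap.apply ℝ (fun _ : Fin n => E) F
          (Fin.tail (Fin.tail v))).contDiff.contDiffAt.comp x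
            (hf.iteratedFDeriv_right (by exact_mod_cast (add_comm 2 n).le))
      rw [iteratedFDeriv_add_two_apply hf, iteratedFDeriv_add_two_apply hf, tail,
        (hsmooth.isSymmSndFDerivAt (by simp)).eq]
      simp [hw]
    | succ j =>
      have head : w 0 = v 0 := by
        simp only [hw, comp_apply]
        rw [Equiv.swap_apply_of_ne_of_ne] <;> simp [Fin.ext_iff]
      have tail : Fin.tail w = Fin.tail v ∘ Equiv.swap j.castSucc j.succ := by
        ext k
        simp only [hw, Fin.tail, comp_apply, ← Fin.succ_castSucc]
        exact congrArg v ((Fin.succ_injective (n + 1)).swap_apply j.castSucc j.succ k)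
      have hlt : ((n + 1 : ℕ) : WithTop ℕ∞) < (n + 1 + 1 : ℕ) := by
        exact_mod_cast n.succ.lt_succ_self
      have swap_tail : ∀ᶠ y in 𝓝 x, iteratedFDeriv ℝ (n + 1) f y (Fin.tail w) =
          iteratedFDeriv ℝ (n + 1) f y (Fin.tail v) :=
        (hf.eventually (by simp)).mono fun y hy => tail ▸ ih (hy.of_le hlt.le) j (Fin.tail v)
      have hd := hf.differentiableAt_iteratedFDeriv hlt
      rw [hd.iteratedFDeriv_succ_apply_left', hd.iteratedFDeriv_succ_apply_left', head,
        Filter.EventuallyEq.fderiv_eq swap_tail]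

lemma iteratedFDeriv_comp_perm {n : ℕ} {f : E → F} {x : E} (hf : ContDiffAt ℝ n f x)
    (v : Fin n → E) (s : Equiv.Perm (Fin n)) :
    iteratedFDeriv ℝ n f x (v ∘ s) = iteratedFDeriv ℝ n f x v := by
  cases n with
  | zero => exact congrArg _ (Subsingleton.elim _ _)
  | succ n =>
    have hs : s ∈ Submonoid.closure (range fun i : Fin n => Equiv.swap i.castSucc i.succ) := by
      rw [Equiv.Perm.mclosure_swap_castSucc_succ]; trivial
    induction hs using Submonoid.closure_induction generalizing v with
    | mem y hy =>
      obtain ⟨i, rfl⟩ := hy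
      exact iteratedFDeriv_comp_swap hf i v
    | one => rfl
    | mul a b _ _ ha hb => exact (hb (v ∘ a)).trans (ha v)

lemma iteratedFDeriv_symmetric_apply_sub [CompleteSpace F] {n : ℕ} (T : E [×n]→L[ℝ] F)
    (hT : ∀ (v : Fin n → E) (s : Equiv.Perm (Fin n)), T (v ∘ s) = T v) (x₀ : E) (i : ℕ) :
    iteratedFDeriv ℝ i (fun y => T fun _ => y - x₀) x₀ =
      if h : i = n then (n ! : ℝ) • (h ▸ T) else 0 := by
  set p : FormalMultilinearSeries ℝ E F := fun k => if h : k = n then h ▸ T else 0 with hp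
  have hradius : p.radius = ⊤ :=
    p.radius_eq_top_of_forall_image_add_eq_zero (n + 1) fun k => by simp [hp]; omega
  have hsum : p.sum = fun y => T fun _ => y := by
    ext y
    rw [FormalMultilinearSeries.sum, tsum_eq_single n fun k hk => by simp [hp, hk]]
    simp [hp]
  have hseries := (p.hasFPowerSeriesOnBall (by rw [hradius]; simp)).comp_sub x₀
  rw [hsum, zero_add] at hseries
  ext v
  rw [hseries.iteratedFDeriv_eq_sum_of_completeSpace]
  by_cases h : i = n
  · subst h
    have sym (s : Equiv.Perm (Fin i)) : T (fun j => v (s j)) = T v := hT v s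
    simp [hp, sym, Fintype.card_perm, Nat.cast_smul_eq_nsmul]
  · simp [hp, h]

/-- The Taylor polynomial of `f` at `x₀`, with the terms of degree at most `N`. -/
noncomputable def taylorPoly (f : E → F) (x₀ : E) (N : ℕ) (y : E) : F :=
  ∑ j ∈ Finset.range (N + 1), ((j ! : ℝ)⁻¹ • iteratedFDeriv ℝ j f x₀) fun _ => y - x₀

lemma contDiff_taylorPoly (f : E → F) (x₀ : E) (N : ℕ) : ContDiff ℝ ∞ (taylorPoly f x₀ N) :=
  ContDiff.sum fun _ _ => (ContinuousMultilinearMap.contDiff _).comp (by fun_prop)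

lemma iteratedFDeriv_taylorPoly [CompleteSpace F] {f : E → F} {x₀ : E} {N i : ℕ}
    (hf : ContDiffAt ℝ N f x₀) (hi : i ≤ N) :
    iteratedFDeriv ℝ i (taylorPoly f x₀ N) x₀ = iteratedFDeriv ℝ i f x₀ := by
  have term (j : ℕ) (hj : j ∈ Finset.range (N + 1)) := iteratedFDeriv_symmetric_apply_sub
    ((j ! : ℝ)⁻¹ • iteratedFDeriv ℝ j f x₀) (fun v s => by
      have hfj : ContDiffAt ℝ j f x₀ :=
        hf.of_le (by exact_mod_cast Nat.lt_succ_iff.1 (Finset.mem_range.1 hj))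
      simp only [smul_apply, iteratedFDeriv_comp_perm hfj]) x₀ i
  have smooth (j : ℕ) : ContDiffAt ℝ i
      (fun y => ((j ! : ℝ)⁻¹ • iteratedFDeriv ℝ j f x₀) fun _ => y - x₀) x₀ :=
    ((ContinuousMultilinearMap.contDiff _).comp (by fun_prop)).contDiffAt
  unfold taylorPoly
  rw [iteratedFDeriv_fun_sum_apply fun j _ => smooth j, Finset.sum_congr rfl term,
    Finset.sum_eq_single_of_mem i (Finset.mem_range.2 (by omega))
      fun j _ hj => dif_neg hj.symm, dif_pos rfl, smul_smul, mul_inv_cancel₀ (by positivity),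
    one_smul]

lemma norm_sub_le_of_mem_segment {x y z : E} (hz : z ∈ segment ℝ x y) : ‖z - x‖ ≤ ‖y - x‖ := by
  have h := dist_add_dist_of_mem_segment hz
  rw [← dist_eq_norm', ← dist_eq_norm', ← h]
  exact le_add_of_nonneg_right dist_nonneg

lemma norm_iteratedFDeriv_le_of_vanishing {C : Set E} {g : E → F} {x₀ : E} {N : ℕ} {M : ℝ}
    (hg : ∀ y ∈ C, ContDiffAt ℝ N g y) (hC : Convex ℝ C) (hx₀ : x₀ ∈ C)
    (hvanish : ∀ i < N, iteratedFDeriv ℝ i g x₀ = 0)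
    (hM : ∀ y ∈ C, ‖iteratedFDeriv ℝ N g y‖ ≤ M) :
    ∀ {k}, k ≤ N → ∀ y ∈ C, ‖iteratedFDeriv ℝ (N - k) g y‖ ≤ M * ‖y - x₀‖ ^ k := by
  have hM0 : 0 ≤ M := (norm_nonneg _).trans (hM x₀ hx₀)
  intro k
  induction k with
  | zero => simpa using hM
  | succ k ih =>
    intro hk y hy
    have hseg : segment ℝ x₀ y ⊆ C := hC.segment_subset hx₀ hy
    have mean_value := (convex_segment x₀ y).norm_image_sub_le_of_norm_fderiv_le (𝕜 := ℝ)
      (f := iteratedFDeriv ℝ (N - (k + 1)) g) (C := M * ‖y - x₀‖ ^ k)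
      (fun z hz => (hg z (hseg hz)).differentiableAt_iteratedFDeriv (by exact_mod_cast (by omega)))
      (fun z hz => ?_) (left_mem_segment ℝ x₀ y) (right_mem_segment ℝ x₀ y)
    · rwa [hvanish _ (by omega), sub_zero, mul_assoc, ← pow_succ] at mean_value
    · rw [norm_fderiv_iteratedFDeriv, show N - (k + 1) + 1 = N - k by omega]
      refine (ih (by omega) z (hseg hz)).trans ?_
      gcongr
      exact norm_sub_le_of_mem_segment hz

lemma norm_le_of_vanishing {C : Set E} {g : E → F} {x₀ : E} {N : ℕ} {M : ℝ}
    (hg : ∀ y ∈ C, ContDiffAt ℝ N g y) (hC : Convex ℝ C) (hx₀ : x₀ ∈ C)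
    (hvanish : ∀ i < N, iteratedFDeriv ℝ i g x₀ = 0)
    (hM : ∀ y ∈ C, ‖iteratedFDeriv ℝ N g y‖ ≤ M) {y : E} (hy : y ∈ C) :
    ‖g y‖ ≤ M * ‖y - x₀‖ ^ N := by
  have h := norm_iteratedFDeriv_le_of_vanishing hg hC hx₀ hvanish hM le_rfl y hy
  rwa [Nat.sub_self, norm_iteratedFDeriv_zero] at h

/-! ### Differentiation under the integral sign -/

/-- A family of functions, smooth on the open set `U`, all of whose derivatives are locally
dominated by an integrable function of the parameter, so that its integral may be differentiated
under the integral sign to any order. -/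
structure HasDominatedDerivs {Ω : Type*} [MeasurableSpace Ω] (μ : Measure Ω) (f : Ω → E → F)
    (U : Set E) : Prop where
  isOpen : IsOpen U
  contDiffOn : ∀ᵐ w ∂μ, ContDiffOn ℝ ∞ (f w) U
  aestronglyMeasurable : ∀ n : ℕ, ∀ x ∈ U,
    AEStronglyMeasurable (fun w => iteratedFDeriv ℝ n (f w) x) μ
  bound : ∀ n : ℕ, ∀ x ∈ U, ∃ s ∈ 𝓝 x, ∃ b : Ω → ℝ, Integrable b μ ∧
    ∀ᵐ w ∂μ, ∀ y ∈ s, ‖iteratedFDeriv ℝ n (f w) y‖ ≤ b w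

namespace HasDominatedDerivs

variable {Ω : Type*} [MeasurableSpace Ω] {μ : Measure Ω} {f : Ω → E → F} {U : Set E} {x : E}

lemma integrable_iteratedFDeriv (h : HasDominatedDerivs μ f U) (n : ℕ) (hx : x ∈ U) :
    Integrable (fun w => iteratedFDeriv ℝ n (f w) x) μ := by
  obtain ⟨s, hs, b, hbi, hb⟩ := h.bound n x hx
  exact hbi.mono' (h.aestronglyMeasurable n x hx) (hb.mono fun w hw => hw x (mem_of_mem_nhds hs))

lemma integrable (h : HasDominatedDerivs μ f U) (hx : x ∈ U) : Integrable (fun w => f w x) μ := by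
  simpa using (ContinuousMultilinearMap.apply ℝ (fun _ : Fin 0 => E) F 0).integrable_comp
    (h.integrable_iteratedFDeriv 0 hx)

lemma hasFDerivAt_integral_iteratedFDeriv (h : HasDominatedDerivs μ f U) (n : ℕ) (hx : x ∈ U) :
    HasFDerivAt (fun y => ∫ w, iteratedFDeriv ℝ n (f w) y ∂μ)
      (∫ w, fderiv ℝ (iteratedFDeriv ℝ n (f w)) x ∂μ) x := by
  obtain ⟨s, hs, b, hbi, hb⟩ := h.bound (n + 1) x hx
  refine hasFDerivAt_integral_of_dominated_of_fderiv_le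
    (F' := fun y w => fderiv ℝ (iteratedFDeriv ℝ n (f w)) y)
    (inter_mem hs (h.isOpen.mem_nhds hx)) (bound := b) ?_ (h.integrable_iteratedFDeriv n hx) ?_ ?_
    hbi ?_
  · filter_upwards [h.isOpen.mem_nhds hx] with y hy using h.aestronglyMeasurable n y hy
  · have hm := (continuousMultilinearCurryLeftEquiv ℝ (fun _ : Fin (n + 1) => E)
      F).continuous.comp_aestronglyMeasurable (h.aestronglyMeasurable (n + 1) x hx)
    simpa only [iteratedFDeriv_succ_eq_comp_left, comp_def,
      LinearIsometryEquiv.apply_symm_apply] using hm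
  · filter_upwards [hb] with w hw y hy
    rw [norm_fderiv_iteratedFDeriv]
    exact hw y hy.1
  · filter_upwards [h.contDiffOn] with w hw y hy
    exact ((hw.contDiffAt (h.isOpen.mem_nhds hy.2)).differentiableAt_iteratedFDeriv
      (by exact_mod_cast WithTop.coe_lt_top _)).hasFDerivAt

lemma iteratedFDeriv_integral (h : HasDominatedDerivs μ f U) (n : ℕ)
    (hx : x ∈ U) :
    iteratedFDeriv ℝ n (fun y => ∫ w, f w y ∂μ) x = ∫ w, iteratedFDeriv ℝ n (f w) x ∂μ := by
  induction n generalizing x with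
  | zero =>
    simp only [iteratedFDeriv_zero_eq_comp, comp_def]
    exact ((continuousMultilinearCurryFin0 ℝ E F).symm.toContinuousLinearEquiv.integral_comp_comm
      _).symm
  | succ n ih =>
    have near : iteratedFDeriv ℝ n (fun y => ∫ w, f w y ∂μ) =ᶠ[𝓝 x]
        fun y => ∫ w, iteratedFDeriv ℝ n (f w) y ∂μ := by
      filter_upwards [h.isOpen.mem_nhds hx] with y hy using ih hy
    simp only [iteratedFDeriv_succ_eq_comp_left, comp_def]
    rw [near.fderiv_eq, (h.hasFDerivAt_integral_iteratedFDeriv n hx).fderiv]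
    exact (ContinuousLinearEquiv.integral_comp_comm (𝕜 := ℝ) (E := E →L[ℝ] E [×n]→L[ℝ] F)
      (F := E [×(n + 1)]→L[ℝ] F) (continuousMultilinearCurryLeftEquiv ℝ (fun _ : Fin (n + 1) => E)
        F).symm.toContinuousLinearEquiv fun w => fderiv ℝ (iteratedFDeriv ℝ n (f w)) x).symm

lemma contDiffOn_integral (h : HasDominatedDerivs μ f U) :
    ContDiffOn ℝ ∞ (fun y => ∫ w, f w y ∂μ) U := by
  refine contDiffOn_of_differentiableOn fun n _ x hx => ?_
  refine ((h.hasFDerivAt_integral_iteratedFDeriv n hx).differentiableAt.congr_of_eventuallyEq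
    ?_).differentiableWithinAt
  filter_upwards [h.isOpen.mem_nhds hx] with y hy
  rw [iteratedFDerivWithin_of_isOpen n h.isOpen hy, h.iteratedFDeriv_integral n hy]

end HasDominatedDerivs

lemma iteratedFDeriv_slice {Ψ : E × F → G} {x : E} {z : F} {n : ℕ}
    (h : ContDiffAt ℝ n Ψ (x, z)) :
    iteratedFDeriv ℝ n (fun y => Ψ (y, z)) x = (iteratedFDeriv ℝ n Ψ (x, z)).compContinuousLinearMap
      fun _ => ContinuousLinearMap.inl ℝ E F := by
  obtain ⟨u, hu, hxu, hΨ⟩ := exists_isOpen_contDiffOn h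
  set inl := ContinuousLinearMap.inl ℝ E F
  have hcomp : (fun y => Ψ (y, z)) = (fun p : E × F => Ψ (p + (0, z))) ∘ inl := by
    ext y; simp [inl]
  have hu' : IsOpen ((fun p : E × F => p + (0, z)) ⁻¹' u) := hu.preimage (by fun_prop)
  have hu'' := hu'.preimage inl.continuous
  have hx : inl x ∈ (fun p : E × F => p + (0, z)) ⁻¹' u := by simpa [inl] using hxu
  have hshift : ContDiffOn ℝ n (fun p : E × F => Ψ (p + (0, z))) ((· + (0, z)) ⁻¹' u) :=
    hΨ.comp (by fun_prop) fun _ hp => hp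
  have key := inl.iteratedFDerivWithin_comp_right hshift hu'.uniqueDiffOn hu''.uniqueDiffOn hx
    le_rfl
  rw [iteratedFDerivWithin_of_isOpen n hu'' hx, iteratedFDerivWithin_of_isOpen n hu' hx,
    iteratedFDeriv_comp_add_right] at key
  rw [hcomp, key]
  simp [inl]

lemma continuousOn_iteratedFDeriv_slice {Ψ : E × F → G} {O : Set (E × F)} (hO : IsOpen O)
    (h : ContDiffOn ℝ ∞ Ψ O) (n : ℕ) :
    ContinuousOn (fun p : E × F => iteratedFDeriv ℝ n (fun y => Ψ (y, p.2)) p.1) O := by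
  have hΨ : ContinuousOn (iteratedFDeriv ℝ n Ψ) O :=
    (h.continuousOn_iteratedFDerivWithin (m := n) (by exact_mod_cast le_top)
      hO.uniqueDiffOn).congr fun p hp => (iteratedFDerivWithin_of_isOpen n hO hp).symm
  exact ((ContinuousMultilinearMap.compContinuousLinearMapL fun _ : Fin n =>
    ContinuousLinearMap.inl ℝ E F).continuous.comp_continuousOn hΨ).congr fun p hp =>
      iteratedFDeriv_slice ((h.contDiffAt (hO.mem_nhds hp)).of_le (by exact_mod_cast le_top))

lemma hasDominatedDerivs_restrict_isCompact [ProperSpace E]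
    [MeasurableSpace F] [BorelSpace F] {ν : Measure F} [IsFiniteMeasureOnCompacts ν]
    {Ψ : E × F → G} {U : Set E} {V K : Set F} (hU : IsOpen U) (hV : IsOpen V) (hK : IsCompact K)
    (hKV : K ⊆ V) (h : ContDiffOn ℝ ∞ Ψ (U ×ˢ V)) :
    HasDominatedDerivs (ν.restrict K) (fun z y => Ψ (y, z)) U := by
  have hcont (n : ℕ) := continuousOn_iteratedFDeriv_slice (hU.prod hV) h n
  have ae_of_mem {p : F → Prop} (hp : ∀ z ∈ K, p z) : ∀ᵐ z ∂ν.restrict K, p z :=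
    (ae_restrict_iff' hK.measurableSet).2 (Eventually.of_forall hp)
  refine ⟨hU, ae_of_mem fun z hz => h.comp (by fun_prop) fun y hy => ⟨hy, hKV hz⟩, fun n x hx => ?_,
    fun n x hx => ?_⟩
  · exact ((hcont n).comp (f := fun z => (x, z)) (by fun_prop)
      fun z hz => ⟨hx, hKV hz⟩).aestronglyMeasurable_of_isCompact hK hK.measurableSet
  · obtain ⟨ε, hε, hball⟩ := nhds_basis_closedBall.mem_iff.1 (hU.mem_nhds hx)
    obtain ⟨C, hC⟩ := ((isCompact_closedBall x ε).prod hK).exists_bound_of_continuousOn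
      ((hcont n).mono (prod_mono hball hKV))
    have : IsFiniteMeasure (ν.restrict K) := ⟨by simpa using hK.measure_lt_top⟩
    exact ⟨closedBall x ε, closedBall_mem_nhds x hε, fun _ => C, integrable_const C,
      ae_of_mem fun z hz y hy => hC (y, z) ⟨hy, hz⟩⟩

lemma HasDominatedDerivs.hasDerivBound_setIntegral {Ω : Type*}
    [TopologicalSpace Ω] [MeasurableSpace Ω] {ν : Measure Ω} [IsFiniteMeasureOnCompacts ν]
    {K : Set Ω} {f : Ω → E → F} {U : Set E} {x : E} {n : ℕ} {A M : ℝ}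
    (h : HasDominatedDerivs (ν.restrict K) f U) (hK : IsCompact K) (hx : x ∈ U)
    (hf : ∀ z ∈ K, HasDerivBound (f z) x n A M) :
    HasDerivBound (fun y => ∫ z in K, f z y ∂ν) x n (ν.real K * A) M := by
  refine ⟨(h.contDiffOn_integral.contDiffAt (h.isOpen.mem_nhds hx)).of_le
    (by exact_mod_cast le_top), fun i hi => ?_⟩
  rw [h.iteratedFDeriv_integral i hx, mul_assoc, mul_comm (ν.real K)]
  exact norm_setIntegral_le_of_norm_le_const hK.measure_lt_top fun z hz => (hf z hz).norm_le i hi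

namespace HasDerivBound

variable {f : E → F} {x : E} {n : ℕ} {A M : ℝ}

lemma absorb_scale {c : ℝ} (h : HasDerivBound f x n A (c * M)) (hc : 1 ≤ c) (hM : 0 ≤ M) :
    HasDerivBound f x n (A * c ^ n) M := by
  have hA := h.nonneg
  refine ⟨h.contDiffAt, fun i hi => (h.norm_le i hi).trans ?_⟩
  rw [mul_pow, ← mul_assoc]
  gcongr

lemma to_unit_scale (h : HasDerivBound f x n A M) (hM : 1 ≤ M) :
    HasDerivBound f x n (A * M ^ n) 1 :=
  absorb_scale (by rwa [mul_one]) hM zero_le_one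

lemma clm_add_const (L : E →L[ℝ] F) (c : F) (hM : 0 ≤ M) (hx : ‖L x + c‖ ≤ A)
    (hL : ‖L‖ ≤ A * M) : HasDerivBound (fun y => L y + c) x n A M := by
  have hA : 0 ≤ A := (norm_nonneg _).trans hx
  have hfderiv : fderiv ℝ (fun y => L y + c) = fun _ => L := by
    ext1 y; simp
  refine ⟨by fun_prop, fun i _ => ?_⟩
  rcases i with - | - | i
  · simpa using hx
  · rw [← norm_iteratedFDeriv_fderiv, hfderiv]
    simpa using hL
  · rw [← norm_iteratedFDeriv_fderiv, hfderiv, iteratedFDeriv_succ_const]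
    simp only [Pi.zero_apply, norm_zero]
    positivity

lemma smul_id_add_const {x : E} {a : ℝ} {b : E} (hM : 0 ≤ M) (hx : ‖a • x + b‖ ≤ A)
    (ha : |a| ≤ A * M) : HasDerivBound (fun y => a • y + b) x n A M := by
  refine clm_add_const (a • ContinuousLinearMap.id ℝ E) b hM hx (le_trans ?_ ha)
  rw [norm_smul, Real.norm_eq_abs]
  exact mul_le_of_le_one_right (abs_nonneg a) ContinuousLinearMap.norm_id_le

lemma const_smul_add_const (h : HasDerivBound f x n A M) (hM : 0 ≤ M) {c : ℝ} (hc : 1 ≤ |c|) (b : F)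
    (hb : ‖c • f x + b‖ ≤ A) : HasDerivBound (fun y => c • f y + b) x n A (|c| * M) := by
  have hA := h.nonneg
  have hcf := h.const_smul c
  refine ⟨hcf.contDiffAt.add contDiffAt_const, fun i hi => ?_⟩
  rcases i.eq_zero_or_pos with rfl | hpos
  · simpa using hb
  · rw [fun_iteratedFDeriv_add_apply (hcf.of_le hi).contDiffAt contDiffAt_const,
      iteratedFDeriv_const_of_ne hpos.ne', Pi.zero_apply, add_zero]
    calc _ ≤ |c| * A * M ^ i := hcf.norm_le i hi
      _ ≤ |c| ^ i * A * M ^ i := by gcongr; exact le_self_pow₀ hc hpos.ne'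
      _ = A * (|c| * M) ^ i := by ring

end HasDerivBound

lemma hasDerivBound_multilinear {j : ℕ} (T : F [×j]→L[ℝ] G) {v : Fin j → F} {R : ℝ} (hR : 1 ≤ R)
    (hv : ‖v‖ ≤ R) (n : ℕ) :
    HasDerivBound (fun v => T v) v n ((j + 1) ^ n * R ^ j * ‖T‖) 1 := by
  refine ⟨T.contDiff.contDiffAt, fun i hi => (T.norm_iteratedFDeriv_le i v).trans ?_⟩
  have hdesc : (j.descFactorial i : ℝ) ≤ (j + 1) ^ n := by
    calc (j.descFactorial i : ℝ) ≤ (j : ℝ) ^ i := by exact_mod_cast j.descFactorial_le_pow i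
      _ ≤ (j + 1) ^ i := by gcongr; linarith
      _ ≤ (j + 1) ^ n := pow_le_pow_right₀ (by simp) hi
  have hpow : ‖v‖ ^ (j - i) ≤ R ^ j :=
    (pow_le_pow_left₀ (norm_nonneg v) hv _).trans (pow_le_pow_right₀ hR (Nat.sub_le _ _))
  rw [Fintype.card_fin, one_pow, mul_one, mul_right_comm _ (R ^ j)]
  gcongr

lemma exists_hasDerivBound_multilinear_affine (j n : ℕ) {R : ℝ} (hR : 1 ≤ R) :
    ∃ C, 0 ≤ C ∧ ∀ (T : F [×j]→L[ℝ] G) (L : Fin j → E →L[ℝ] F) (c : Fin j → F) (x : E),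
      (∀ k, ‖L k‖ ≤ 1) → (∀ k, ‖L k x + c k‖ ≤ R) →
        HasDerivBound (fun y => T fun k => L k y + c k) x n (C * ‖T‖) 1 := by
  refine ⟨n ! * ((j + 1) ^ n * R ^ j) * R ^ n, by positivity, fun T L c x hL hx => ?_⟩
  have hpi : ‖ContinuousLinearMap.pi L‖ ≤ R * 1 := by
    refine (ContinuousLinearMap.opNorm_le_bound _ zero_le_one fun y => ?_).trans (by linarith)
    exact (pi_norm_le_iff_of_nonneg (by positivity)).2 fun k => (L k).le_of_opNorm_le (hL k) y
  have hval : ‖ContinuousLinearMap.pi L x + c‖ ≤ R :=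
    (pi_norm_le_iff_of_nonneg (by positivity)).2 hx
  have h := HasDerivBound.comp (f := fun y => ContinuousLinearMap.pi L y + c)
    (hasDerivBound_multilinear T hR hval n)
    (HasDerivBound.clm_add_const _ c zero_le_one hval hpi) hR zero_le_one
  exact (h.to_unit_scale (by simpa)).mono (le_of_eq (by ring)) zero_le_one le_rfl

lemma exists_hasDerivBound_taylorPoly (N n : ℕ) (R : ℝ) :
    ∃ C, 0 ≤ C ∧ ∀ (f : E → F) (x₀ y : E) (B : ℝ), ‖y - x₀‖ ≤ R →
      (∀ j ≤ N, ‖iteratedFDeriv ℝ j f x₀‖ ≤ B) →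
        HasDerivBound (taylorPoly f x₀ N) y n (C * B) 1 := by
  choose C hC0 hC using fun j => exists_hasDerivBound_multilinear_affine (E := E) (F := E) (G := F)
    j n (le_max_left 1 R)
  refine ⟨∑ j ∈ Finset.range (N + 1), C j, Finset.sum_nonneg fun j _ => hC0 j,
    fun f x₀ y B hy hB => ?_⟩
  rw [Finset.sum_mul]
  refine HasDerivBound.sum fun j hj => ?_
  have hT : ‖(j ! : ℝ)⁻¹ • iteratedFDeriv ℝ j f x₀‖ ≤ B := by
    rw [norm_smul, norm_inv, Real.norm_of_nonneg (by positivity)]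
    refine (mul_le_of_le_one_left (norm_nonneg _) (inv_le_one_of_one_le₀ ?_)).trans
      (hB j (Nat.lt_succ_iff.1 (Finset.mem_range.1 hj)))
    exact_mod_cast j.factorial_pos
  have h := hC j ((j ! : ℝ)⁻¹ • iteratedFDeriv ℝ j f x₀) (fun _ => ContinuousLinearMap.id ℝ E)
    (fun _ => -x₀) y (fun _ => ContinuousLinearMap.norm_id_le)
    (fun _ => by simpa [← sub_eq_add_neg] using Or.inr hy)
  simp only [ContinuousLinearMap.id_apply, ← sub_eq_add_neg] at h
  exact h.mono (mul_le_mul_of_nonneg_left hT (hC0 j)) zero_le_one le_rfl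

lemma exists_norm_sub_taylorPoly_le [CompleteSpace F] (N : ℕ) (R : ℝ) :
    ∃ C, 0 ≤ C ∧ ∀ (f : E → F) (x₀ y : E) (B : ℝ), ‖y - x₀‖ ≤ R →
      (∀ z ∈ segment ℝ x₀ y, HasDerivBound f z N B 1) →
        ‖f y - taylorPoly f x₀ N y‖ ≤ C * B * ‖y - x₀‖ ^ N := by
  obtain ⟨C, hC0, hC⟩ := exists_hasDerivBound_taylorPoly (E := E) (F := F) N N R
  refine ⟨1 + C, by positivity, fun f x₀ y B hy hf => ?_⟩
  have hx₀ := left_mem_segment ℝ x₀ y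
  have hpoly (z) (hz : z ∈ segment ℝ x₀ y) : HasDerivBound (taylorPoly f x₀ N) z N (C * B) 1 :=
    hC f x₀ z B ((norm_sub_le_of_mem_segment hz).trans hy) fun j hj => by
      simpa using (hf x₀ hx₀).norm_le j hj
  have hsub (z) (hz : z ∈ segment ℝ x₀ y) :
      HasDerivBound (fun z => f z - taylorPoly f x₀ N z) z N ((1 + C) * B) 1 := by
    have h := (hf z hz).add ((hpoly z hz).const_smul (-1))
    simp only [neg_one_smul, ← sub_eq_add_neg] at h
    exact h.mono (le_of_eq (by rw [abs_neg, abs_one]; ring)) zero_le_one le_rfl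
  refine norm_le_of_vanishing (C := segment ℝ x₀ y) (fun z hz => (hsub z hz).contDiffAt)
    (convex_segment x₀ y) hx₀ (fun i hi => ?_)
    (fun z hz => by simpa using (hsub z hz).norm_le N le_rfl) (right_mem_segment ℝ x₀ y)
  rw [← Pi.sub_def, iteratedFDeriv_sub_apply ((hf x₀ hx₀).of_le hi.le).contDiffAt
    ((hpoly x₀ hx₀).of_le hi.le).contDiffAt, iteratedFDeriv_taylorPoly (hf x₀ hx₀).contDiffAt hi.le,
    sub_self]

/-! ### Weights with vanishing moments -/

/-- The coefficients of the entire function `F` determined by `F x = (1 - x) * F (x / 2)` and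
`F 0 = 1` (Euler's `q`-exponential product at `q = 1 / 2`). -/
noncomputable def eulerCoeff : ℕ → ℝ
  | 0 => 1
  | k + 1 => -((1 / 2) ^ k) * eulerCoeff k / (1 - (1 / 2) ^ (k + 1))

lemma half_pow_succ_le (k : ℕ) : (1 / 2 : ℝ) ^ (k + 1) ≤ 1 / 2 :=
  pow_le_of_le_one (by norm_num) (by norm_num) k.succ_ne_zero

lemma eulerCoeff_succ_mul (k : ℕ) :
    eulerCoeff (k + 1) * (1 - (1 / 2) ^ (k + 1)) = -((1 / 2) ^ k) * eulerCoeff k := by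
  rw [eulerCoeff, div_mul_cancel₀]
  linarith [half_pow_succ_le k]

lemma abs_eulerCoeff_succ_le (k : ℕ) :
    |eulerCoeff (k + 1)| ≤ 2 * (1 / 2) ^ k * |eulerCoeff k| := by
  have h := congrArg abs (eulerCoeff_succ_mul k)
  have hle := half_pow_succ_le k
  rw [abs_mul, abs_mul, abs_neg, abs_of_nonneg (by linarith : (0 : ℝ) ≤ 1 - (1 / 2) ^ (k + 1)),
    abs_of_nonneg (by positivity : (0 : ℝ) ≤ (1 / 2) ^ k)] at h
  nlinarith [abs_nonneg (eulerCoeff (k + 1))]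

lemma summable_abs_eulerCoeff_mul_pow (R : ℝ) : Summable fun k => |eulerCoeff k| * R ^ k := by
  have hlim : Tendsto (fun k : ℕ => 2 * (1 / 2 : ℝ) ^ k * |R|) atTop (𝓝 0) := by
    simpa using ((tendsto_pow_atTop_nhds_zero_of_lt_one (r := (1 / 2 : ℝ)) (by norm_num)
      (by norm_num)).const_mul 2).mul_const |R|
  refine summable_of_ratio_norm_eventually_le (r := 1 / 2) (by norm_num) ?_
  filter_upwards [hlim.eventually (gt_mem_nhds one_half_pos)] with k hk
  simp only [norm_mul, norm_pow, Real.norm_eq_abs, abs_abs]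
  calc |eulerCoeff (k + 1)| * |R| ^ (k + 1)
      ≤ (2 * (1 / 2) ^ k * |eulerCoeff k|) * |R| ^ (k + 1) := by
        gcongr; exact abs_eulerCoeff_succ_le k
    _ = (2 * (1 / 2) ^ k * |R|) * (|eulerCoeff k| * |R| ^ k) := by ring
    _ ≤ 1 / 2 * (|eulerCoeff k| * |R| ^ k) := by gcongr

lemma summable_eulerCoeff_mul_pow (x : ℝ) : Summable fun k => eulerCoeff k * x ^ k :=
  (summable_abs_eulerCoeff_mul_pow |x|).of_norm_bounded fun k => by simp

/-- The entire function `∏ (1 - x / 2 ^ k)`, as a power series. -/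
noncomputable def eulerFun (x : ℝ) : ℝ := ∑' k, eulerCoeff k * x ^ k

lemma eulerFun_eq (x : ℝ) : eulerFun x = (1 - x) * eulerFun (x / 2) := by
  have hx := summable_eulerCoeff_mul_pow x
  have hx2 := summable_eulerCoeff_mul_pow (x / 2)
  have term (k : ℕ) : eulerCoeff (k + 1) * x ^ (k + 1) - eulerCoeff (k + 1) * (x / 2) ^ (k + 1) =
      -x * (eulerCoeff k * (x / 2) ^ k) := by
    calc _ = eulerCoeff (k + 1) * (1 - (1 / 2) ^ (k + 1)) * x ^ (k + 1) := by
          rw [div_eq_mul_one_div, mul_pow]; ring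
      _ = _ := by rw [eulerCoeff_succ_mul, div_eq_mul_one_div x, mul_pow]; ring
  have hsub : eulerFun x - eulerFun (x / 2) = -x * eulerFun (x / 2) := by
    rw [eulerFun, eulerFun, ← hx.tsum_sub hx2, (hx.sub hx2).tsum_eq_zero_add]
    simp only [term, pow_zero, sub_self, zero_add, tsum_mul_left]
  linarith

lemma eulerFun_two_pow (j : ℕ) : eulerFun (2 ^ j) = 0 := by
  induction j with
  | zero => rw [eulerFun_eq, pow_zero, sub_self, zero_mul]
  | succ j ih => rw [eulerFun_eq, pow_succ, mul_div_cancel_right₀ _ two_ne_zero, ih, mul_zero]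

lemma eulerFun_zero : eulerFun 0 = 1 := by
  rw [eulerFun, tsum_eq_single 0 fun k hk => by simp [hk]]
  simp [eulerCoeff]

lemma continuousOn_eulerFun : ContinuousOn eulerFun (Icc 0 1) := by
  refine continuousOn_tsum (u := fun k => |eulerCoeff k| * 1 ^ k) (by fun_prop)
    (summable_abs_eulerCoeff_mul_pow 1) fun k x hx => ?_
  rw [norm_mul, norm_pow, Real.norm_eq_abs, Real.norm_of_nonneg hx.1]
  gcongr
  exacts [hx.1, hx.2]

lemma eulerFun_half_ne_zero : eulerFun (1 / 2) ≠ 0 := by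
  intro h
  have vanish (n : ℕ) : eulerFun ((1 / 2) ^ (n + 1)) = 0 := by
    induction n with
    | zero => simpa using h
    | succ n ih =>
      rw [eulerFun_eq] at ih
      rw [pow_succ, mul_one_div]
      exact (mul_eq_zero.1 ih).resolve_left (by linarith [half_pow_succ_le n])
  have hmem (n : ℕ) : (1 / 2 : ℝ) ^ (n + 1) ∈ Icc (0 : ℝ) 1 :=
    ⟨by positivity, pow_le_one₀ (by norm_num) (by norm_num)⟩
  have hpow : Tendsto (fun n : ℕ => (1 / 2 : ℝ) ^ (n + 1)) atTop (𝓝[Icc 0 1] 0) :=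
    tendsto_nhdsWithin_iff.2 ⟨(tendsto_add_atTop_iff_nat 1).2
      (tendsto_pow_atTop_nhds_zero_of_lt_one (by norm_num) (by norm_num)), .of_forall hmem⟩
  have hlim := (continuousOn_eulerFun 0 (by simp)).tendsto.comp hpow
  simp only [comp_def, vanish, eulerFun_zero] at hlim
  exact zero_ne_one (tendsto_nhds_unique tendsto_const_nhds hlim)

/-- Weights `b k` attached to the scales `2 ^ k`, with total mass `1`, vanishing higher moments and
faster than polynomial decay: superposing an expansion in powers of the scale with these weights
isolates its constant term. -/
structure IsMomentSequence (b : ℕ → ℝ) : Prop where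
  summable_abs : ∀ p : ℕ, Summable fun k => |b k| * (2 ^ k) ^ p
  hasSum : HasSum b 1
  hasSum_mul_pow : ∀ j ≠ 0, HasSum (fun k => b k * (2 ^ k) ^ j) 0

lemma exists_isMomentSequence : ∃ b, IsMomentSequence b := by
  have hscale (j k : ℕ) : eulerCoeff k * (1 / 2) ^ k / eulerFun (1 / 2) * (2 ^ k) ^ (j + 1) =
      eulerCoeff k * (2 ^ j) ^ k / eulerFun (1 / 2) := by
    have h : (1 / 2 : ℝ) ^ k * (2 ^ k) ^ (j + 1) = (2 ^ j) ^ k := by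
      rw [pow_succ, mul_left_comm, ← mul_pow, ← pow_mul, ← pow_mul, mul_comm k j]
      norm_num
    rw [← h]; ring
  refine ⟨fun k => eulerCoeff k * (1 / 2) ^ k / eulerFun (1 / 2), fun p => ?_, ?_, fun j hj => ?_⟩
  · refine ((summable_abs_eulerCoeff_mul_pow (1 / 2 * 2 ^ p)).mul_right
      |eulerFun (1 / 2)|⁻¹).congr fun k => ?_
    rw [abs_div, abs_mul, abs_of_nonneg (by positivity : (0 : ℝ) ≤ (1 / 2) ^ k), mul_pow, ← pow_mul,
      ← pow_mul, mul_comm p k]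
    ring
  · have h := (summable_eulerCoeff_mul_pow (1 / 2)).hasSum.div_const (eulerFun (1 / 2))
    rwa [← eulerFun, div_self eulerFun_half_ne_zero] at h
  · obtain ⟨i, rfl⟩ := Nat.exists_eq_succ_of_ne_zero hj
    have h := (summable_eulerCoeff_mul_pow (2 ^ i)).hasSum.div_const (eulerFun (1 / 2))
    rw [← eulerFun, eulerFun_two_pow, zero_div] at h
    exact h.congr_fun (hscale i)

/-! ### Averages at a single scale -/

section Weight

variable {E : Type*} [NormedAddCommGroup E]

/-- The weight `exp (-μ ‖x‖²)`. -/
noncomputable def gaussianWeight (μ : ℝ) (x : E) : ℝ := Real.exp (-(μ * ‖x‖ ^ 2))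

variable {μ : ℝ} {x : E}

lemma gaussianWeight_pos : 0 < gaussianWeight μ x := Real.exp_pos _

lemma gaussianWeight_le_one (hμ : 0 ≤ μ) : gaussianWeight μ x ≤ 1 :=
  Real.exp_le_one_iff.2 (neg_nonpos.2 (by positivity))

lemma gaussianWeight_lt_one (hμ : 0 < μ) (hx : x ≠ 0) : gaussianWeight μ x < 1 :=
  Real.exp_lt_one_iff.2 (neg_neg_of_pos (by positivity))

lemma one_sub_gaussianWeight_pos (hμ : 0 < μ) (hx : x ≠ 0) : 0 < 1 - gaussianWeight μ x :=
  sub_pos.2 (gaussianWeight_lt_one hμ hx)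

lemma one_le_one_add_div_one_sub_gaussianWeight (hμ : 0 < μ) (hx : x ≠ 0) :
    1 ≤ (1 + μ) / (1 - gaussianWeight μ x) := by
  rw [one_le_div (one_sub_gaussianWeight_pos hμ hx)]
  linarith [gaussianWeight_pos (μ := μ) (x := x)]

lemma gaussianWeight_zero_left : gaussianWeight 0 x = 1 := by simp [gaussianWeight]

lemma gaussianWeight_zero_right : gaussianWeight μ (0 : E) = 1 := by simp [gaussianWeight]

lemma gaussianWeight_anti {ν : ℝ} (h : μ ≤ ν) : gaussianWeight ν x ≤ gaussianWeight μ x :=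
  Real.exp_le_exp.2 (neg_le_neg (by gcongr))

lemma one_sub_gaussianWeight_le : 1 - gaussianWeight μ x ≤ μ * ‖x‖ ^ 2 := by
  have := Real.add_one_le_exp (-(μ * ‖x‖ ^ 2))
  unfold gaussianWeight
  linarith

lemma sq_norm_le_mul_one_sub_gaussianWeight (hμ : 0 < μ) :
    ‖x‖ ^ 2 ≤ (‖x‖ ^ 2 + μ⁻¹) * (1 - gaussianWeight μ x) := by
  have hexp : gaussianWeight μ x * (μ * ‖x‖ ^ 2 + 1) ≤ 1 := by
    calc _ ≤ gaussianWeight μ x * Real.exp (μ * ‖x‖ ^ 2) :=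
          mul_le_mul_of_nonneg_left (Real.add_one_le_exp _) gaussianWeight_pos.le
      _ = 1 := by rw [gaussianWeight, ← Real.exp_add, neg_add_cancel, Real.exp_zero]
  have hfactor : ‖x‖ ^ 2 + μ⁻¹ = μ⁻¹ * (μ * ‖x‖ ^ 2 + 1) := by field_simp
  rw [hfactor, mul_assoc, ← div_eq_inv_mul, le_div_iff₀ hμ]
  linarith

lemma norm_pow_mul_inv_one_sub_gaussianWeight_pow_le (hμ : 0 < μ) (hx : x ≠ 0)
    {r : ℝ} (hxr : ‖x‖ ≤ r) (l : ℕ) : ‖x‖ ^ (2 * l) * (1 - gaussianWeight μ x)⁻¹ ^ l ≤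
      (r ^ 2 + 1) ^ l * (1 + μ⁻¹) ^ l := by
  have hσ := one_sub_gaussianWeight_pos hμ hx
  rw [pow_mul, ← mul_pow, ← mul_pow]
  refine pow_le_pow_left₀ (by positivity) ?_ l
  calc ‖x‖ ^ 2 * (1 - gaussianWeight μ x)⁻¹ ≤ ‖x‖ ^ 2 + μ⁻¹ := by
        rw [← div_eq_mul_inv, div_le_iff₀ hσ]
        exact sq_norm_le_mul_one_sub_gaussianWeight hμ
    _ ≤ r ^ 2 + μ⁻¹ := by gcongr
    _ ≤ (r ^ 2 + 1) * (1 + μ⁻¹) := by nlinarith [mul_nonneg (sq_nonneg r) (inv_pos.2 hμ).le]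

/-- A neighbourhood of `closedBall 0 r`, for `s < r` and `0 < μ`, from which every `samplePoint`
towards a `z` with `‖z‖ ≤ s` lies in `ball 0 r`. -/
def samplingDomain (E : Type*) [NormedAddCommGroup E] (r s μ : ℝ) : Set E :=
  {x | gaussianWeight μ x * ‖x‖ + (1 - gaussianWeight μ x) * s < r}

variable {r s : ℝ}

lemma isOpen_samplingDomain : IsOpen (samplingDomain E r s μ) := by
  unfold samplingDomain gaussianWeight
  exact isOpen_lt (by fun_prop) continuous_const

lemma samplingDomain_mono (hs : s < r) {ν : ℝ} (hν : 0 ≤ ν) (h : ν ≤ μ) :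
    samplingDomain E r s ν ⊆ samplingDomain E r s μ := by
  intro x (hx : _ < r)
  have hanti := gaussianWeight_anti h (x := x)
  have hpos := gaussianWeight_pos (μ := μ) (x := x)
  change _ < r
  rcases le_total ‖x‖ s with hxs | hxs <;> nlinarith [gaussianWeight_le_one hν (x := x)]

lemma closedBall_subset_samplingDomain (hr : 0 < r) (hs : s < r) (hμ : 0 < μ) :
    closedBall 0 r ⊆ samplingDomain E r s μ := by
  intro x hx
  rw [mem_closedBall_zero_iff] at hx
  change _ < r
  rcases eq_or_ne x 0 with rfl | hx0
  · simpa [gaussianWeight_zero_right] using hr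
  · nlinarith [gaussianWeight_lt_one hμ hx0, gaussianWeight_pos (μ := μ) (x := x)]

end Weight

section SamplePoint

/-- The point reached from `x` by moving towards `z` with proportion `1 - exp (-μ ‖x‖²)`. The
displacement is of order `μ ‖x‖²`, hence the origin is fixed to second order. -/
noncomputable def samplePoint (μ : ℝ) (z x : E) : E := z + gaussianWeight μ x • (x - z)

variable {μ R : ℝ} {z x : E}

lemma samplePoint_eq :
    samplePoint μ z x = gaussianWeight μ x • x + (1 - gaussianWeight μ x) • z := by
  rw [samplePoint]; module

lemma samplePoint_sub : samplePoint μ z x - x = (1 - gaussianWeight μ x) • (z - x) := by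
  rw [samplePoint]; module

lemma samplePoint_zero_left : samplePoint 0 z x = x := by
  rw [samplePoint, gaussianWeight_zero_left, one_smul, add_sub_cancel]

lemma samplePoint_zero_right : samplePoint μ z 0 = 0 := by
  rw [samplePoint, gaussianWeight_zero_right, one_smul, add_sub_cancel]

lemma norm_samplePoint_le (hμ : 0 ≤ μ) :
    ‖samplePoint μ z x‖ ≤ gaussianWeight μ x * ‖x‖ + (1 - gaussianWeight μ x) * ‖z‖ := by
  rw [samplePoint_eq]
  refine (norm_add_le _ _).trans_eq ?_
  rw [norm_smul, norm_smul, Real.norm_of_nonneg gaussianWeight_pos.le,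
    Real.norm_of_nonneg (sub_nonneg.2 (gaussianWeight_le_one hμ))]

lemma norm_samplePoint_sub_le (hμ : 0 ≤ μ) (hz : ‖z‖ ≤ R) (hx : ‖x‖ ≤ R) :
    ‖samplePoint μ z x - x‖ ≤ 2 * R * (1 - gaussianWeight μ x) := by
  have hgap := sub_nonneg.2 (gaussianWeight_le_one hμ (x := x))
  rw [samplePoint_sub, norm_smul, Real.norm_of_nonneg hgap, mul_comm]
  exact mul_le_mul_of_nonneg_right ((norm_sub_le _ _).trans (by linarith)) hgap

lemma norm_samplePoint_le_mul_norm (hμ : 0 ≤ μ) (hz : ‖z‖ ≤ R) (hx : ‖x‖ ≤ R) :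
    ‖samplePoint μ z x‖ ≤ (1 + R ^ 2) * (1 + μ) * ‖x‖ := by
  have hle := gaussianWeight_le_one hμ (x := x)
  have hR : 0 ≤ R := (norm_nonneg x).trans hx
  calc ‖samplePoint μ z x‖ ≤ 1 * ‖x‖ + (μ * ‖x‖ ^ 2) * R :=
        (norm_samplePoint_le hμ).trans (add_le_add (mul_le_mul_of_nonneg_right hle (norm_nonneg x))
          (mul_le_mul one_sub_gaussianWeight_le hz (norm_nonneg z) (by positivity)))
    _ ≤ 1 * ‖x‖ + (μ * (R * ‖x‖)) * R := by
        rw [sq]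
        gcongr
    _ ≤ (1 + R ^ 2) * (1 + μ) * ‖x‖ := by
        have := mul_nonneg hμ (norm_nonneg x)
        have := mul_nonneg (sq_nonneg R) (norm_nonneg x)
        linarith

lemma samplePoint_mem_ball {r s : ℝ} (hμ : 0 ≤ μ) (hx : x ∈ samplingDomain E r s μ)
    (hz : ‖z‖ ≤ s) : samplePoint μ z x ∈ ball 0 r := by
  rw [mem_ball_zero_iff]
  exact ((norm_samplePoint_le hμ).trans (add_le_add_right (mul_le_mul_of_nonneg_left hz
    (sub_nonneg.2 (gaussianWeight_le_one hμ))) _)).trans_lt hx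

end SamplePoint

section InnerProduct

variable {E F : Type*} [NormedAddCommGroup E] [InnerProductSpace ℝ E]
  [NormedAddCommGroup F] [NormedSpace ℝ F]

section

variable {μ R : ℝ} {z x : E}

lemma contDiff_gaussianWeight (μ : ℝ) : ContDiff ℝ ∞ (gaussianWeight (E := E) μ) :=
  (contDiff_const.mul (contDiff_norm_sq ℝ)).neg.exp

lemma hasDerivBound_exp {y : ℝ} (hy : y ≤ 0) (n : ℕ) : HasDerivBound Real.exp y n 1 1 := by
  refine ⟨Real.contDiff_exp.contDiffAt, fun i _ => ?_⟩
  rw [norm_iteratedFDeriv_eq_norm_iteratedDeriv, iteratedDeriv_eq_iterate, Real.iter_deriv_exp,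
    Real.norm_of_nonneg (Real.exp_pos y).le, one_pow, mul_one]
  exact Real.exp_le_one_iff.2 hy

lemma exists_hasDerivBound_gaussianWeight [FiniteDimensional ℝ E] (n : ℕ) (R : ℝ) :
    ∃ C, 1 ≤ C ∧ ∀ (μ : ℝ) (x : E), 0 ≤ μ → ‖x‖ ≤ R →
      HasDerivBound (gaussianWeight μ) x n n ! (C * (1 + μ)) := by
  obtain ⟨C, hC1, hC⟩ := exists_hasDerivBound isOpen_univ
    (contDiff_norm_sq ℝ (E := E)).contDiffOn (isCompact_closedBall 0 R) (subset_univ _) n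
  refine ⟨C, hC1, fun μ x hμ hx => ?_⟩
  have inner : HasDerivBound (fun y : E => -(μ * ‖y‖ ^ 2)) x n (C * (1 + μ)) 1 := by
    have h := (hC x (mem_closedBall_zero_iff.2 hx)).const_smul (-μ)
    simp only [smul_eq_mul, neg_mul, abs_neg, abs_of_nonneg hμ] at h
    exact h.mono (by nlinarith) zero_le_one le_rfl
  have h := HasDerivBound.comp (f := fun y : E => -(μ * ‖y‖ ^ 2))
    (hasDerivBound_exp (neg_nonpos.2 (by positivity)) n) inner
    (one_le_mul_of_one_le_of_one_le hC1 (by linarith)) zero_le_one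
  rwa [mul_one, mul_one] at h

lemma contDiff_samplePoint (μ : ℝ) : ContDiff ℝ ∞ fun p : E × E => samplePoint μ p.2 p.1 :=
  contDiff_snd.add (((contDiff_gaussianWeight μ).comp contDiff_fst).smul
    (contDiff_fst.sub contDiff_snd))

lemma exists_hasDerivBound_samplePoint [FiniteDimensional ℝ E] (n : ℕ) (R : ℝ) :
    ∃ C, 1 ≤ C ∧ ∀ (μ : ℝ) (z x : E), 0 ≤ μ → ‖z‖ ≤ R → ‖x‖ ≤ R →
      HasDerivBound (samplePoint μ z) x n C (C * (1 + μ)) := by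
  rcases lt_or_ge R 0 with hR | hR
  · exact ⟨1, le_rfl, fun μ z x _ hz => absurd ((norm_nonneg z).trans hz) (not_le.2 hR)⟩
  obtain ⟨C, hC1, hC⟩ := exists_hasDerivBound_gaussianWeight (E := E) n R
  set C' : ℝ := C + 2 ^ n * (n ! * (2 * R + 1)) + R
  have hCC' : C ≤ C' := by simp only [C', add_assoc]; exact le_add_of_nonneg_right (by positivity)
  refine ⟨C', hC1.trans hCC', fun μ z x hμ hz hx => ?_⟩
  have hM : 1 ≤ C * (1 + μ) := one_le_mul_of_one_le_of_one_le hC1 (by linarith)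
  have hsub : HasDerivBound (fun y => y - z) x n (2 * R + 1) (C * (1 + μ)) := by
    have h := HasDerivBound.smul_id_add_const (n := n) (A := 2 * R + 1) (a := 1) (b := -z)
      (zero_le_one.trans hM)
      (by rw [one_smul]; exact (norm_add_le x (-z)).trans (by rw [norm_neg]; linarith))
      (by rw [abs_one]; nlinarith)
    simpa only [one_smul, ← sub_eq_add_neg] using h
  have h := (((hC μ x hμ hx).smul hsub (by positivity)).add_const (by positivity) z)
  simp only [add_comm _ z] at h
  refine h.mono ?_ (by positivity) (by gcongr)
  simp only [C']
  linarith

lemma exists_hasDerivBound_comp_samplePoint [FiniteDimensional ℝ E] (n : ℕ) (R : ℝ) :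
    ∃ C, 0 ≤ C ∧ ∀ (g : E → F) (μ : ℝ) (z x : E) (B : ℝ), 0 ≤ μ → ‖z‖ ≤ R → ‖x‖ ≤ R →
      HasDerivBound g (samplePoint μ z x) n B 1 →
        HasDerivBound (fun y => g (samplePoint μ z y)) x n (C * (1 + μ) ^ n * B) 1 := by
  obtain ⟨C, hC1, hC⟩ := exists_hasDerivBound_samplePoint (E := E) n R
  refine ⟨n ! * (C * C) ^ n, by positivity, fun g μ z x B hμ hz hx hg => ?_⟩
  have hM : 1 ≤ C * (C * (1 + μ)) := one_le_mul_of_one_le_of_one_le hC1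
    (one_le_mul_of_one_le_of_one_le hC1 (by linarith))
  refine ((hg.comp (hC μ z x hμ hz hx) hC1 (by positivity)).to_unit_scale hM).mono
    (le_of_eq ?_) zero_le_one le_rfl
  rw [← mul_assoc C C, mul_pow]
  ring

end

end InnerProduct

section InnerProduct

variable {E F : Type*} [NormedAddCommGroup E] [InnerProductSpace ℝ E]
  [NormedAddCommGroup F] [NormedSpace ℝ F]

section Averaging

variable [FiniteDimensional ℝ E] [MeasurableSpace E] [BorelSpace E] {ν : Measure E}
  {r μ : ℝ} {ρ : E → ℝ}

/-- The average of `f` at `x` over the points `samplePoint μ z x`, weighted by the density `ρ z`. -/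
noncomputable def flatAverage (ν : Measure E) (r : ℝ) (ρ : E → ℝ) (μ : ℝ) (f : E → F) (x : E) : F :=
  ∫ z in closedBall 0 (3 * r / 4), ρ z • f (samplePoint μ z x) ∂ν

lemma hasDominatedDerivs_flatAverage [IsFiniteMeasureOnCompacts ν] (hρ : ContDiff ℝ ∞ ρ)
    (hr : 0 < r) (hμ : 0 ≤ μ) {f : E → F} (hf : ContDiffOn ℝ ∞ f (ball 0 r)) :
    HasDominatedDerivs (ν.restrict (closedBall 0 (3 * r / 4)))
      (fun z x => ρ z • f (samplePoint μ z x)) (samplingDomain E r (7 * r / 8) μ) := by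
  have hmaps : MapsTo (fun p : E × E => samplePoint μ p.2 p.1)
      (samplingDomain E r (7 * r / 8) μ ×ˢ ball 0 (7 * r / 8)) (ball 0 r) := fun p hp =>
    samplePoint_mem_ball hμ hp.1 (mem_ball_zero_iff.1 hp.2).le
  exact hasDominatedDerivs_restrict_isCompact isOpen_samplingDomain isOpen_ball
    (isCompact_closedBall 0 _) (closedBall_subset_ball (by linarith))
    ((hρ.comp contDiff_snd).contDiffOn.smul (hf.comp (contDiff_samplePoint μ).contDiffOn hmaps))

lemma flatAverage_add [IsFiniteMeasureOnCompacts ν] (hρ : ContDiff ℝ ∞ ρ) (hr : 0 < r) (hμ : 0 ≤ μ)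
    {f g : E → F} (hf : ContDiffOn ℝ ∞ f (ball 0 r)) (hg : ContDiffOn ℝ ∞ g (ball 0 r)) {x : E}
    (hx : x ∈ samplingDomain E r (7 * r / 8) μ) :
    flatAverage ν r ρ μ (fun y => f y + g y) x =
      flatAverage ν r ρ μ f x + flatAverage ν r ρ μ g x := by
  simp only [flatAverage, smul_add]
  exact integral_add ((hasDominatedDerivs_flatAverage hρ hr hμ hf).integrable hx)
    ((hasDominatedDerivs_flatAverage hρ hr hμ hg).integrable hx)

lemma exists_hasDerivBound_flatAverage [IsFiniteMeasureOnCompacts ν]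
    (hρ : ContDiff ℝ ∞ ρ) (hr : 0 < r) (n : ℕ) (R : ℝ) :
    ∃ C, 0 ≤ C ∧ ∀ (f : E → F) (μ : ℝ) (x : E) (B : ℝ), 0 ≤ μ → ‖x‖ ≤ R →
      x ∈ samplingDomain E r (7 * r / 8) μ → ContDiffOn ℝ ∞ f (ball 0 r) →
      (∀ z, ‖z‖ ≤ 3 * r / 4 → HasDerivBound f (samplePoint μ z x) n B 1) →
        HasDerivBound (flatAverage ν r ρ μ f) x n (C * (1 + μ) ^ n * B) 1 := by
  obtain ⟨C, hC0, hC⟩ := exists_hasDerivBound_comp_samplePoint (E := E) (F := F) n (max R r)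
  obtain ⟨c, hc⟩ := (isCompact_closedBall (0 : E) (3 * r / 4)).exists_bound_of_continuousOn
    hρ.continuous.continuousOn
  refine ⟨ν.real (closedBall 0 (3 * r / 4)) * (|c| * C), by positivity,
    fun f μ x B hμ hx hxd hf hB => ?_⟩
  have hpoint : ∀ z ∈ closedBall (0 : E) (3 * r / 4), HasDerivBound
      (fun y => ρ z • f (samplePoint μ z y)) x n (|c| * (C * (1 + μ) ^ n * B)) 1 := fun z hz => by
    have hzr := mem_closedBall_zero_iff.1 hz
    have h := hC f μ z x B hμ ((hzr.trans (by linarith)).trans (le_max_right R r))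
      (hx.trans (le_max_left R r)) (hB z hzr)
    exact (h.const_smul (ρ z)).mono
      (mul_le_mul_of_nonneg_right ((hc z hz).trans (le_abs_self c)) h.nonneg) zero_le_one le_rfl
  refine ((hasDominatedDerivs_flatAverage hρ hr hμ hf).hasDerivBound_setIntegral
    (isCompact_closedBall 0 _) hxd hpoint).mono (le_of_eq ?_) zero_le_one le_rfl
  ring

end Averaging

end InnerProduct

/-! ### Recentering the sample points -/

section GapRatio

variable {E : Type*} [NormedAddCommGroup E] {μ : ℝ} {x₀ x : E}

/-- The ratio of the proportions by which `samplePoint μ` moves `x` and `x₀`. -/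
noncomputable def gapRatio (μ : ℝ) (x₀ x : E) : ℝ :=
  (1 - gaussianWeight μ x₀)⁻¹ * (1 - gaussianWeight μ x)

lemma gapRatio_pos (hμ : 0 < μ) (hx₀ : x₀ ≠ 0) (hx : x ≠ 0) : 0 < gapRatio μ x₀ x :=
  mul_pos (inv_pos.2 (one_sub_gaussianWeight_pos hμ hx₀)) (one_sub_gaussianWeight_pos hμ hx)

lemma gapRatio_self (hμ : 0 < μ) (hx₀ : x₀ ≠ 0) : gapRatio μ x₀ x₀ = 1 :=
  inv_mul_cancel₀ (one_sub_gaussianWeight_pos hμ hx₀).ne'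

end GapRatio

section Recentering

variable {μ : ℝ} {x₀ x z : E}

/-- The target towards which `x` has to be moved in order to reach `samplePoint μ z x₀`. -/
noncomputable def recenter (μ : ℝ) (x₀ z x : E) : E :=
  x + (gapRatio μ x₀ x)⁻¹ • ((1 - gaussianWeight μ x₀)⁻¹ • (x₀ - x) + (z - x₀))

/-- The density in `z` of the averages at `x`, after the substitution by `recenter μ x₀ z x` which
makes their sample points independent of `x`. -/
noncomputable def recenteredKernel (ρ : E → ℝ) (μ : ℝ) (x₀ z x : E) : ℝ :=
  (gapRatio μ x₀ x)⁻¹ ^ Module.finrank ℝ E * ρ (recenter μ x₀ z x)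

lemma recenter_self (hμ : 0 < μ) (hx₀ : x₀ ≠ 0) : recenter μ x₀ z x₀ = z := by
  simp [recenter, gapRatio_self hμ hx₀]

lemma recenter_eq : recenter μ x₀ z x = (gapRatio μ x₀ x)⁻¹ • z + recenter μ x₀ 0 x := by
  simp only [recenter]; module

lemma samplePoint_recenter (hμ : 0 < μ) (hx₀ : x₀ ≠ 0) (hx : x ≠ 0) :
    samplePoint μ (recenter μ x₀ z x) x = samplePoint μ z x₀ := by
  have hσ₀ := (one_sub_gaussianWeight_pos hμ hx₀).ne'
  have hσ := (one_sub_gaussianWeight_pos hμ hx).ne'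
  have hcancel : (1 - gaussianWeight μ x) * (gapRatio μ x₀ x)⁻¹ = 1 - gaussianWeight μ x₀ := by
    rw [gapRatio]; field_simp
  rw [eq_add_of_sub_eq samplePoint_sub, eq_add_of_sub_eq (samplePoint_sub (x := x₀)), recenter,
    add_sub_cancel_left, smul_smul, hcancel, smul_add, smul_smul, mul_inv_cancel₀ hσ₀, one_smul]
  abel

end Recentering

section InnerProduct

variable {E F : Type*} [NormedAddCommGroup E] [InnerProductSpace ℝ E]
  [NormedAddCommGroup F] [NormedSpace ℝ F] {μ r : ℝ} {x₀ x z : E}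

lemma contDiff_gapRatio : ContDiff ℝ ∞ (gapRatio μ x₀) :=
  contDiff_const.mul (contDiff_const.sub (contDiff_gaussianWeight μ))

lemma contDiffOn_inv_gapRatio (hμ : 0 < μ) (hx₀ : x₀ ≠ 0) :
    ContDiffOn ℝ ∞ (fun x => (gapRatio μ x₀ x)⁻¹) {0}ᶜ :=
  contDiff_gapRatio.contDiffOn.inv fun _ hx => (gapRatio_pos hμ hx₀ hx).ne'

lemma contDiffOn_recenter (hμ : 0 < μ) (hx₀ : x₀ ≠ 0) (V : Set E) :
    ContDiffOn ℝ ∞ (fun p : E × E => recenter μ x₀ p.2 p.1) ({0}ᶜ ×ˢ V) :=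
  contDiff_fst.contDiffOn.add (((contDiffOn_inv_gapRatio hμ hx₀).comp contDiff_fst.contDiffOn
    fun _ hp => hp.1).smul ((contDiff_const.smul (contDiff_const.sub contDiff_fst)).add
      (contDiff_snd.sub contDiff_const)).contDiffOn)

lemma contDiffOn_recenteredKernel {ρ : E → ℝ} (hρ : ContDiff ℝ ∞ ρ) (hμ : 0 < μ) (hx₀ : x₀ ≠ 0)
    (V : Set E) : ContDiffOn ℝ ∞ (fun p : E × E => recenteredKernel ρ μ x₀ p.2 p.1) ({0}ᶜ ×ˢ V) :=
  (((contDiffOn_inv_gapRatio hμ hx₀).comp contDiff_fst.contDiffOn fun _ hp => hp.1).pow _).mul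
    (hρ.comp_contDiffOn (contDiffOn_recenter hμ hx₀ V))

lemma eventually_lt_norm_recenter (hr : 0 < r) (hμ : 0 < μ) (hx₀ : x₀ ≠ 0) :
    ∀ᶠ x in 𝓝 x₀, ∀ z, 3 * r / 4 < ‖z‖ → r / 2 < ‖recenter μ x₀ z x‖ := by
  have hx₀' : ({0}ᶜ : Set E) ∈ 𝓝 x₀ := isOpen_compl_singleton.mem_nhds hx₀
  have hinv : ContinuousAt (fun x => (gapRatio μ x₀ x)⁻¹) x₀ :=
    (contDiffOn_inv_gapRatio hμ hx₀).continuousOn.continuousAt hx₀'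
  have hshift : ContinuousAt (recenter μ x₀ 0) x₀ :=
    ((contDiffOn_recenter hμ hx₀ univ).continuousOn.comp (f := fun x => (x, (0 : E)))
      (by fun_prop) fun x hx => ⟨hx, trivial⟩).continuousAt hx₀'
  have hlim : r / 2 < (gapRatio μ x₀ x₀)⁻¹ * (3 * r / 4) - ‖recenter μ x₀ 0 x₀‖ := by
    rw [gapRatio_self hμ hx₀, recenter_self hμ hx₀, norm_zero]
    linarith
  filter_upwards [((hinv.mul (continuousAt_const (y := 3 * r / 4))).sub hshift.norm).eventually
    (lt_mem_nhds hlim),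
    hx₀'] with x hx hx0 z hz
  have hpos := inv_pos.2 (gapRatio_pos hμ hx₀ hx0)
  calc r / 2 < (gapRatio μ x₀ x)⁻¹ * (3 * r / 4) - ‖recenter μ x₀ 0 x‖ := hx
    _ ≤ ‖(gapRatio μ x₀ x)⁻¹ • z‖ - ‖-recenter μ x₀ 0 x‖ := by
        rw [norm_smul, norm_neg, Real.norm_of_nonneg hpos.le]
        gcongr
    _ ≤ ‖recenter μ x₀ z x‖ := by
        rw [recenter_eq (z := z), ← sub_neg_eq_add]
        exact norm_sub_norm_le _ _

section ScaleBounds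

variable [FiniteDimensional ℝ E] (n : ℕ) (R : ℝ)

lemma exists_hasDerivBound_gapRatio : ∃ C, 1 ≤ C ∧ ∀ (μ : ℝ) (x₀ : E), 0 < μ → x₀ ≠ 0 → ‖x₀‖ ≤ R →
    HasDerivBound (gapRatio μ x₀) x₀ n C ((1 + μ) / (1 - gaussianWeight μ x₀)) := by
  obtain ⟨C, hC1, hC⟩ := exists_hasDerivBound_gaussianWeight (E := E) n R
  refine ⟨n ! * C ^ n, one_le_mul_of_one_le_of_one_le (mod_cast n.factorial_pos)
    (one_le_pow₀ hC1), fun μ x₀ hμ hx₀ hxR => ?_⟩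
  have hσ := one_sub_gaussianWeight_pos hμ hx₀
  have habs : |-(1 - gaussianWeight μ x₀)⁻¹| = (1 - gaussianWeight μ x₀)⁻¹ := by
    rw [abs_neg, abs_of_pos (inv_pos.2 hσ)]
  have h := ((hC μ x₀ hμ.le hxR).const_smul_add_const (by positivity)
    (c := -(1 - gaussianWeight μ x₀)⁻¹) (b := (1 - gaussianWeight μ x₀)⁻¹)
    (by rw [habs]; exact (one_le_inv₀ hσ).2 (by linarith [gaussianWeight_pos (μ := μ) (x := x₀)]))
    (by
      have : -(1 - gaussianWeight μ x₀)⁻¹ • gaussianWeight μ x₀ + (1 - gaussianWeight μ x₀)⁻¹ =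
        1 := by rw [smul_eq_mul]; field_simp; ring
      rw [this, norm_one]
      exact_mod_cast n.factorial_pos))
  rw [habs, ← div_eq_inv_mul, mul_div_assoc] at h
  have hfun : gapRatio μ x₀ = fun y => -(1 - gaussianWeight μ x₀)⁻¹ • gaussianWeight μ y +
      (1 - gaussianWeight μ x₀)⁻¹ := by
    ext y; rw [gapRatio, smul_eq_mul]; ring
  rw [hfun]
  exact h.absorb_scale hC1 (zero_le_one.trans (one_le_one_add_div_one_sub_gaussianWeight hμ hx₀))

lemma exists_hasDerivBound_inv_gapRatio_pow (d : ℕ) :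
    ∃ C, 1 ≤ C ∧ ∀ (μ : ℝ) (x₀ : E), 0 < μ → x₀ ≠ 0 → ‖x₀‖ ≤ R →
      HasDerivBound (fun x => (gapRatio μ x₀ x)⁻¹ ^ d) x₀ n C
        ((1 + μ) / (1 - gaussianWeight μ x₀)) := by
  obtain ⟨C, hC1, hC⟩ := exists_hasDerivBound_gapRatio (E := E) n R
  obtain ⟨D, hD1, hD⟩ := exists_hasDerivBound (f := fun s : ℝ => s⁻¹ ^ d) isOpen_compl_singleton
    ((contDiffOn_id.inv fun _ hs => hs).pow d) isCompact_singleton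
    (singleton_subset_iff.2 (one_ne_zero (α := ℝ))) n
  refine ⟨n ! * D * C ^ n, one_le_mul_of_one_le_of_one_le (one_le_mul_of_one_le_of_one_le
    (mod_cast n.factorial_pos) hD1) (one_le_pow₀ hC1), fun μ x₀ hμ hx₀ hxR => ?_⟩
  have hM := zero_le_one.trans (one_le_one_add_div_one_sub_gaussianWeight hμ hx₀)
  exact ((hD _ (gapRatio_self hμ hx₀)).comp (hC μ x₀ hμ hx₀ hxR) hC1 hM).absorb_scale hC1 hM

lemma exists_hasDerivBound_recenter : ∃ C, 1 ≤ C ∧ ∀ (μ : ℝ) (x₀ z : E), 0 < μ → x₀ ≠ 0 →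
    ‖x₀‖ ≤ R → ‖z‖ ≤ R →
      HasDerivBound (recenter μ x₀ z) x₀ n C ((1 + μ) / (1 - gaussianWeight μ x₀)) := by
  obtain ⟨C, hC1, hC⟩ := exists_hasDerivBound_inv_gapRatio_pow (E := E) n R 1
  refine ⟨|R| + 1 + 2 ^ n * (C * (2 * |R| + 1)),
    le_add_of_le_of_nonneg (by linarith [abs_nonneg R]) (by positivity),
    fun μ x₀ z hμ hx₀ hxR hzR => ?_⟩
  set σ := 1 - gaussianWeight μ x₀
  have hσ : 0 < σ := one_sub_gaussianWeight_pos hμ hx₀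
  have hM : 1 ≤ (1 + μ) / σ := one_le_one_add_div_one_sub_gaussianWeight hμ hx₀
  have hσM : σ⁻¹ ≤ (1 + μ) / σ := by rw [← one_div]; gcongr; linarith
  have hid : HasDerivBound (fun x => x) x₀ n (|R| + 1) ((1 + μ) / σ) := by
    have h := HasDerivBound.smul_id_add_const (n := n) (x := x₀) (A := |R| + 1) (a := 1) (b := 0)
      (zero_le_one.trans hM) (by simpa using by linarith [le_abs_self R])
      (by rw [abs_one]; exact one_le_mul_of_one_le_of_one_le (by linarith [abs_nonneg R]) hM)
    simpa using h
  have hdir : HasDerivBound (fun x => σ⁻¹ • (x₀ - x) + (z - x₀)) x₀ n (2 * |R| + 1)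
      ((1 + μ) / σ) := by
    have hfun (x : E) : σ⁻¹ • (x₀ - x) + (z - x₀) = -σ⁻¹ • x + (σ⁻¹ • x₀ + (z - x₀)) := by module
    simp only [hfun]
    refine HasDerivBound.smul_id_add_const (zero_le_one.trans hM) ?_ ?_
    · rw [← hfun, sub_self, smul_zero, zero_add]
      exact (norm_sub_le _ _).trans (by linarith [le_abs_self R])
    · rw [abs_neg, abs_of_pos (inv_pos.2 hσ)]
      exact hσM.trans (le_mul_of_one_le_left (zero_le_one.trans hM) (by linarith [abs_nonneg R]))
  have hinv := hC μ x₀ hμ hx₀ hxR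
  simp only [pow_one] at hinv
  exact hid.add (hinv.smul hdir (zero_le_one.trans hM))

lemma exists_hasDerivBound_recenteredKernel {ρ : E → ℝ} (hρ : ContDiff ℝ ∞ ρ) :
    ∃ C, 0 ≤ C ∧ ∀ (μ : ℝ) (x₀ z : E), 0 < μ → x₀ ≠ 0 → ‖x₀‖ ≤ R → ‖z‖ ≤ R →
      HasDerivBound (recenteredKernel ρ μ x₀ z) x₀ n C ((1 + μ) / (1 - gaussianWeight μ x₀)) := by
  obtain ⟨A, hA1, hA⟩ := exists_hasDerivBound_inv_gapRatio_pow (E := E) n R (Module.finrank ℝ E)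
  obtain ⟨B, hB1, hB⟩ := exists_hasDerivBound_recenter (E := E) n R
  obtain ⟨D, hD1, hD⟩ := exists_hasDerivBound isOpen_univ hρ.contDiffOn
    (isCompact_closedBall 0 R) (subset_univ _) n
  refine ⟨2 ^ n * (A * (n ! * D * B ^ n)), by positivity, fun μ x₀ z hμ hx₀ hxR hzR => ?_⟩
  have hM := zero_le_one.trans (one_le_one_add_div_one_sub_gaussianWeight hμ hx₀)
  have hz : recenter μ x₀ z x₀ ∈ closedBall 0 R := by
    rwa [recenter_self hμ hx₀, mem_closedBall_zero_iff]
  exact (hA μ x₀ hμ hx₀ hxR).smul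
    (((hD _ hz).comp (hB μ x₀ z hμ hx₀ hxR hzR) hB1 hM).absorb_scale hB1 hM) hM

end ScaleBounds

end InnerProduct

lemma integral_comp_smul_add [FiniteDimensional ℝ E] [MeasurableSpace E] [BorelSpace E]
    (ν : Measure E) [ν.IsAddHaarMeasure] (g : E → F) (e : E) {c : ℝ} (hc : 0 < c) :
    ∫ z, c ^ Module.finrank ℝ E • g (c • z + e) ∂ν = ∫ z, g z ∂ν := by
  rw [integral_smul, Measure.integral_comp_smul ν (fun y => g (y + e)), integral_add_right_eq_self,
    abs_of_pos (by positivity), smul_inv_smul₀ (by positivity)]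

/-- Smooth densities of total mass one, supported in the ball of radius `r / 2`. -/
structure IsAveragingKernel [MeasurableSpace E] (ν : Measure E) (r : ℝ) (ρ : E → ℝ) : Prop where
  contDiff : ContDiff ℝ ∞ ρ
  eq_zero : ∀ z, r / 2 < ‖z‖ → ρ z = 0
  integral_eq_one : ∫ z, ρ z ∂ν = 1

section InnerProduct

variable {E F : Type*} [NormedAddCommGroup E] [InnerProductSpace ℝ E] [NormedAddCommGroup F]
  [NormedSpace ℝ F] [FiniteDimensional ℝ E] [MeasurableSpace E] [BorelSpace E] {ν : Measure E}
  [ν.IsAddHaarMeasure] {r : ℝ} {ρ : E → ℝ} (hρ : IsAveragingKernel ν r ρ) (hr : 0 < r)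

include hρ hr

lemma flatAverage_eventuallyEq {μ : ℝ} (hμ : 0 < μ) {x₀ : E} (hx₀ : x₀ ≠ 0) (f : E → F) :
    flatAverage ν r ρ μ f =ᶠ[𝓝 x₀] fun x =>
      ∫ z in closedBall 0 (3 * r / 4), recenteredKernel ρ μ x₀ z x • f (samplePoint μ z x₀) ∂ν := by
  filter_upwards [eventually_lt_norm_recenter hr hμ hx₀, isOpen_compl_singleton.mem_nhds hx₀]
    with x hlarge hx
  have hnot (z : E) (hz : z ∉ closedBall 0 (3 * r / 4)) : 3 * r / 4 < ‖z‖ := by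
    simpa using hz
  rw [flatAverage, setIntegral_eq_integral_of_forall_compl_eq_zero fun z hz => by
      rw [hρ.eq_zero z (by linarith [hnot z hz]), zero_smul],
    setIntegral_eq_integral_of_forall_compl_eq_zero fun z hz => by
      rw [recenteredKernel, hρ.eq_zero _ (hlarge z (hnot z hz)), mul_zero, zero_smul],
    ← integral_comp_smul_add ν _ (recenter μ x₀ 0 x) (inv_pos.2 (gapRatio_pos hμ hx₀ hx))]
  refine integral_congr_ae (Eventually.of_forall fun z => ?_)
  simp only [← recenter_eq (z := z), samplePoint_recenter hμ hx₀ hx, recenteredKernel, mul_smul]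

lemma exists_hasDerivBound_flatAverage_of_norm_le (n : ℕ) :
    ∃ C, 0 ≤ C ∧ ∀ (f : E → F) (μ : ℝ) (x₀ : E) (B : ℝ), 0 < μ → x₀ ≠ 0 → ‖x₀‖ ≤ r →
      ContDiffOn ℝ ∞ f (ball 0 r) → (∀ z, ‖z‖ ≤ 3 * r / 4 → ‖f (samplePoint μ z x₀)‖ ≤ B) →
        HasDerivBound (flatAverage ν r ρ μ f) x₀ n (C * B)
          ((1 + μ) / (1 - gaussianWeight μ x₀)) := by
  obtain ⟨C, hC0, hC⟩ := exists_hasDerivBound_recenteredKernel n r hρ.contDiff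
  refine ⟨ν.real (closedBall 0 (3 * r / 4)) * (2 ^ n * C), by positivity,
    fun f μ x₀ B hμ hx₀ hxr hf hB => ?_⟩
  have hxd := closedBall_subset_samplingDomain hr (by linarith : 7 * r / 8 < r) hμ
    (mem_closedBall_zero_iff.2 hxr)
  have hmaps : MapsTo (fun p : E × E => samplePoint μ p.2 x₀) ({0}ᶜ ×ˢ ball 0 (7 * r / 8))
      (ball 0 r) := fun p hp => samplePoint_mem_ball hμ.le hxd (mem_ball_zero_iff.1 hp.2).le
  have hdom := hasDominatedDerivs_restrict_isCompact (ν := ν) isOpen_compl_singleton isOpen_ball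
    (isCompact_closedBall 0 (3 * r / 4)) (closedBall_subset_ball (by linarith))
    ((contDiffOn_recenteredKernel hρ.contDiff hμ hx₀ (ball 0 (7 * r / 8))).smul (hf.comp
      ((contDiff_samplePoint μ).comp (f := fun p : E × E => (x₀, p.2)) (by fun_prop)).contDiffOn
      hmaps))
  refine HasDerivBound.congr ?_ (flatAverage_eventuallyEq hρ hr hμ hx₀ f)
  rw [mul_assoc]
  refine hdom.hasDerivBound_setIntegral (isCompact_closedBall 0 _) hx₀ fun z hz => ?_
  have hzr := mem_closedBall_zero_iff.1 hz
  have hM := zero_le_one.trans (one_le_one_add_div_one_sub_gaussianWeight hμ hx₀)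
  have h := (hC μ x₀ z hμ hx₀ hxr (by linarith)).smul
    (HasDerivBound.const x₀ n hM (f (samplePoint μ z x₀))) hM
  rw [← mul_assoc] at h
  exact h.mono (mul_le_mul_of_nonneg_left (hB z hzr) (by positivity)) hM le_rfl

end InnerProduct

/-! ### Weighted bounds -/

/-- Smooth functions on the ball of radius `r` whose derivatives of order at most `n` are bounded
by `B * ‖y‖ ^ p`. -/
structure HasWeightedBound (f : E → F) (r : ℝ) (n p : ℕ) (B : ℝ) : Prop where
  contDiffOn : ContDiffOn ℝ ∞ f (ball 0 r)
  norm_le : ∀ y ∈ ball 0 r, ∀ i ≤ n, ‖iteratedFDeriv ℝ i f y‖ ≤ B * ‖y‖ ^ p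

lemma HasWeightedBound.hasDerivBound {f : E → F} {r : ℝ} {n p : ℕ} {B : ℝ}
    (hf : HasWeightedBound f r n p B) {y : E} (hy : y ∈ ball 0 r) :
    HasDerivBound f y n (B * ‖y‖ ^ p) 1 :=
  ⟨(hf.contDiffOn.contDiffAt (isOpen_ball.mem_nhds hy)).of_le (by exact_mod_cast le_top),
    fun i hi => by simpa using hf.norm_le y hy i hi⟩

lemma HasWeightedBound.nonneg {f : E → F} {r : ℝ} {n p : ℕ} {B : ℝ}
    (hf : HasWeightedBound f r n p B) {y : E} (hy : y ∈ ball 0 r) (hy0 : y ≠ 0) : 0 ≤ B :=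
  nonneg_of_mul_nonneg_left (hf.hasDerivBound hy).nonneg (pow_pos (norm_pos_iff.2 hy0) p)

section InnerProduct

variable {E F : Type*} [NormedAddCommGroup E] [InnerProductSpace ℝ E] [NormedAddCommGroup F]
  [NormedSpace ℝ F] {r : ℝ}

lemma exists_norm_sub_taylorPoly_samplePoint_le [CompleteSpace F] (hr : 0 < r) (N p : ℕ) :
    ∃ C, 0 ≤ C ∧ ∀ (f : E → F) (μ : ℝ) (x₀ z : E) (B : ℝ), 0 < μ → x₀ ≠ 0 → x₀ ∈ ball 0 r →
      ‖z‖ ≤ 3 * r / 4 → HasWeightedBound f r N p B →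
        ‖f (samplePoint μ z x₀) - taylorPoly f x₀ N (samplePoint μ z x₀)‖ ≤
          C * ((1 + μ) * ‖x₀‖) ^ p * B * (1 - gaussianWeight μ x₀) ^ N := by
  obtain ⟨C, hC0, hC⟩ := exists_norm_sub_taylorPoly_le (E := E) (F := F) N (2 * r)
  refine ⟨C * (1 + r ^ 2) ^ p * (2 * r) ^ N, by positivity, fun f μ x₀ z B hμ hx₀ hxr hz hf => ?_⟩
  have hB := hf.nonneg hxr hx₀
  have hxr' := (mem_ball_zero_iff.1 hxr).le
  have hdist := norm_samplePoint_sub_le hμ.le (hz.trans (by linarith)) hxr'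
  have hnorm := norm_samplePoint_le_mul_norm hμ.le (hz.trans (by linarith : _ ≤ r)) hxr'
  have hmem : samplePoint μ z x₀ ∈ ball 0 r := samplePoint_mem_ball hμ.le
    (closedBall_subset_samplingDomain hr (by linarith : 3 * r / 4 < r) hμ
      (ball_subset_closedBall hxr)) hz
  have hseg : segment ℝ x₀ (samplePoint μ z x₀) ⊆
      ball 0 r ∩ closedBall 0 ((1 + r ^ 2) * (1 + μ) * ‖x₀‖) := by
    refine ((convex_ball _ _).inter (convex_closedBall _ _)).segment_subset ⟨hxr, ?_⟩
      ⟨hmem, mem_closedBall_zero_iff.2 hnorm⟩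
    exact mem_closedBall_zero_iff.2 (le_mul_of_one_le_left (norm_nonneg _)
      (one_le_mul_of_one_le_of_one_le (by nlinarith) (by linarith)))
  refine (hC f x₀ _ (B * ((1 + r ^ 2) * (1 + μ) * ‖x₀‖) ^ p) (hdist.trans ?_)
    fun w hw => ?_).trans ?_
  · exact mul_le_of_le_one_right (by positivity) (sub_le_self _ gaussianWeight_pos.le)
  · have hw' := mem_closedBall_zero_iff.1 (hseg hw).2
    exact (hf.hasDerivBound (hseg hw).1).mono (by gcongr) zero_le_one le_rfl
  · calc _ ≤ C * (B * ((1 + r ^ 2) * (1 + μ) * ‖x₀‖) ^ p) *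
          (2 * r * (1 - gaussianWeight μ x₀)) ^ N := by gcongr
      _ = _ := by simp only [mul_pow]; ring

variable [FiniteDimensional ℝ E] [MeasurableSpace E] [BorelSpace E] {ν : Measure E}
  [ν.IsAddHaarMeasure] {ρ : E → ℝ} (hρ : IsAveragingKernel ν r ρ) (hr : 0 < r)

include hρ hr

lemma flatAverage_eventuallyEq_taylorPoly_add {μ : ℝ} (hμ : 0 < μ) {x₀ : E} (hx : x₀ ∈ ball 0 r)
    {f : E → F} (hf : ContDiffOn ℝ ∞ f (ball 0 r)) (N : ℕ) :
    flatAverage ν r ρ μ f =ᶠ[𝓝 x₀] fun x => flatAverage ν r ρ μ (taylorPoly f x₀ N) x +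
      flatAverage ν r ρ μ (fun y => f y - taylorPoly f x₀ N y) x := by
  have hP := (contDiff_taylorPoly f x₀ N).contDiffOn (s := ball 0 r)
  filter_upwards [isOpen_samplingDomain.mem_nhds (closedBall_subset_samplingDomain hr
    (by linarith : 7 * r / 8 < r) hμ (ball_subset_closedBall hx))] with x hx
  rw [← flatAverage_add hρ.contDiff hr hμ.le hP (hf.sub hP) hx]
  simp only [add_sub_cancel]

lemma exists_hasDerivBound_flatAverage_taylorPoly (n N p : ℕ) :
    ∃ C, 0 ≤ C ∧ ∀ (f : E → F) (μ : ℝ) (x₀ : E) (B : ℝ), 0 < μ → x₀ ∈ ball 0 r →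
      HasWeightedBound f r N p B →
        HasDerivBound (flatAverage ν r ρ μ (taylorPoly f x₀ N)) x₀ n
          (C * (1 + μ) ^ n * (‖x₀‖ ^ p * B)) 1 := by
  obtain ⟨C, hC0, hC⟩ := exists_hasDerivBound_flatAverage (F := F) (ν := ν) hρ.contDiff hr n r
  obtain ⟨D, hD0, hD⟩ := exists_hasDerivBound_taylorPoly (E := E) (F := F) N n (2 * r)
  refine ⟨C * D, by positivity, fun f μ x₀ B hμ hxr hf => ?_⟩
  have hxr' := (mem_ball_zero_iff.1 hxr).le
  have hxd := closedBall_subset_samplingDomain hr (by linarith : 7 * r / 8 < r) hμ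
    (ball_subset_closedBall hxr)
  refine (hC _ μ x₀ (D * (B * ‖x₀‖ ^ p)) hμ.le hxr' hxd (contDiff_taylorPoly f x₀ N).contDiffOn
    fun z hz => hD f x₀ _ _ ?_ (hf.norm_le x₀ hxr)).mono (le_of_eq (by ring)) zero_le_one le_rfl
  refine (norm_samplePoint_sub_le hμ.le (hz.trans (by linarith)) hxr').trans ?_
  exact mul_le_of_le_one_right (by positivity) (sub_le_self _ gaussianWeight_pos.le)

variable [CompleteSpace F]

/-- In the remainder the `N` powers of `1 - gaussianWeight μ x₀` gained from the Taylor expansion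
compete with the `n` powers lost by differentiating the kernel instead of the function. -/
lemma exists_hasDerivBound_flatAverage_sub_taylorPoly (n N p : ℕ) :
    ∃ C, 0 ≤ C ∧ ∀ (f : E → F) (μ : ℝ) (x₀ : E) (B : ℝ), 0 < μ → x₀ ≠ 0 → x₀ ∈ ball 0 r →
      HasWeightedBound f r N p B →
        HasDerivBound (flatAverage ν r ρ μ fun y => f y - taylorPoly f x₀ N y) x₀ n
          (C * (1 + μ) ^ (p + n) * (‖x₀‖ ^ p * B) * ((1 - gaussianWeight μ x₀) ^ N *
            ((1 - gaussianWeight μ x₀)⁻¹) ^ n)) 1 := by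
  obtain ⟨C, hC0, hC⟩ := exists_hasDerivBound_flatAverage_of_norm_le (F := F) hρ hr n
  obtain ⟨D, hD0, hD⟩ := exists_norm_sub_taylorPoly_samplePoint_le (E := E) (F := F) hr N p
  refine ⟨C * D, by positivity, fun f μ x₀ B hμ hx₀ hxr hf => ?_⟩
  have h := hC _ μ x₀ _ hμ hx₀ (mem_ball_zero_iff.1 hxr).le
    (hf.contDiffOn.sub (contDiff_taylorPoly f x₀ N).contDiffOn)
    fun z hz => hD f μ x₀ z B hμ hx₀ hxr hz hf
  refine (h.to_unit_scale (one_le_one_add_div_one_sub_gaussianWeight hμ hx₀)).mono (le_of_eq ?_)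
    zero_le_one le_rfl
  rw [div_eq_mul_inv, mul_pow, mul_pow, pow_add]
  ring

lemma exists_hasDerivBound_flatAverage_of_weighted (n k l : ℕ) :
    ∃ C, 0 ≤ C ∧ ∃ q : ℕ, ∀ (f : E → F) (μ : ℝ) (x₀ : E) (B : ℝ), 0 < μ → x₀ ≠ 0 → x₀ ∈ ball 0 r →
      HasWeightedBound f r n (k + 2 * l) B →
        HasDerivBound (flatAverage ν r ρ μ f) x₀ (n + l)
          (C * (1 + μ) ^ q * (1 + μ⁻¹) ^ l * (‖x₀‖ ^ k * B)) 1 := by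
  obtain ⟨C, hC0, hC⟩ := exists_hasDerivBound_flatAverage_taylorPoly (F := F) hρ hr (n + l) n
    (k + 2 * l)
  obtain ⟨D, hD0, hD⟩ := exists_hasDerivBound_flatAverage_sub_taylorPoly (F := F) hρ hr (n + l) n
    (k + 2 * l)
  refine ⟨(C + D) * (r ^ 2 + 1) ^ l, by positivity, k + 2 * l + (n + l),
    fun f μ x₀ B hμ hx₀ hxr hf => ?_⟩
  have hB := hf.nonneg hxr hx₀
  have hσ := one_sub_gaussianWeight_pos hμ hx₀
  have hgain := norm_pow_mul_inv_one_sub_gaussianWeight_pow_le hμ hx₀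
    (mem_ball_zero_iff.1 hxr).le l
  have hinv : 1 ≤ (1 - gaussianWeight μ x₀)⁻¹ ^ l := one_le_pow₀ <| (one_le_inv₀ hσ).2 <| by
    linarith [gaussianWeight_pos (μ := μ) (x := x₀)]
  have hcancel : (1 - gaussianWeight μ x₀) ^ n * (1 - gaussianWeight μ x₀)⁻¹ ^ (n + l) =
      (1 - gaussianWeight μ x₀)⁻¹ ^ l := by
    rw [pow_add, ← mul_assoc, ← mul_pow, mul_inv_cancel₀ hσ.ne', one_pow, one_mul]
  have hpow : (1 + μ) ^ (n + l) ≤ (1 + μ) ^ (k + 2 * l + (n + l)) :=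
    pow_le_pow_right₀ (by linarith) (Nat.le_add_left _ _)
  refine (((hC f μ x₀ B hμ hxr hf).add (hD f μ x₀ B hμ hx₀ hxr hf)).congr
    (flatAverage_eventuallyEq_taylorPoly_add hρ hr hμ hxr hf.contDiffOn n)).mono ?_
    zero_le_one le_rfl
  rw [hcancel, pow_add ‖x₀‖]
  calc _ ≤ C * (1 + μ) ^ (k + 2 * l + (n + l)) * (‖x₀‖ ^ k * ‖x₀‖ ^ (2 * l) * B) *
          (1 - gaussianWeight μ x₀)⁻¹ ^ l + _ := by
        gcongr ?_ + _
        refine le_trans ?_ (le_mul_of_one_le_right (by positivity) hinv)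
        gcongr
    _ = (C + D) * (1 + μ) ^ (k + 2 * l + (n + l)) * (‖x₀‖ ^ k * B) *
          (‖x₀‖ ^ (2 * l) * (1 - gaussianWeight μ x₀)⁻¹ ^ l) := by ring
    _ ≤ (C + D) * (1 + μ) ^ (k + 2 * l + (n + l)) * (‖x₀‖ ^ k * B) *
          ((r ^ 2 + 1) ^ l * (1 + μ⁻¹) ^ l) := by gcongr
    _ = _ := by ring

lemma exists_hasDerivBound_flatAverage_sub_taylorPoly_of_weighted (n k l : ℕ) :
    ∃ C, 0 ≤ C ∧ ∃ q : ℕ, ∀ (f : E → F) (μ : ℝ) (x₀ : E) (B : ℝ), 0 < μ → x₀ ≠ 0 → x₀ ∈ ball 0 r →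
      HasWeightedBound f r (n + l) k B →
        HasDerivBound (flatAverage ν r ρ μ fun y => f y - taylorPoly f x₀ (n + l) y) x₀ n
          (C * (‖x₀‖ ^ (k + 2 * l) * B) * (1 + μ) ^ q * μ ^ l) 1 := by
  obtain ⟨C, hC0, hC⟩ := exists_hasDerivBound_flatAverage_sub_taylorPoly (F := F) hρ hr n (n + l) k
  refine ⟨C, hC0, k + n, fun f μ x₀ B hμ hx₀ hxr hf => ?_⟩
  have hB := hf.nonneg hxr hx₀
  have hσ := one_sub_gaussianWeight_pos hμ hx₀
  have hcancel : (1 - gaussianWeight μ x₀) ^ (n + l) * (1 - gaussianWeight μ x₀)⁻¹ ^ n =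
      (1 - gaussianWeight μ x₀) ^ l := by
    rw [pow_add, mul_right_comm, ← mul_pow, mul_inv_cancel₀ hσ.ne', one_pow, one_mul]
  refine (hC f μ x₀ B hμ hx₀ hxr hf).mono ?_ zero_le_one le_rfl
  rw [hcancel]
  calc C * (1 + μ) ^ (k + n) * (‖x₀‖ ^ k * B) * (1 - gaussianWeight μ x₀) ^ l
      ≤ C * (1 + μ) ^ (k + n) * (‖x₀‖ ^ k * B) * (μ * ‖x₀‖ ^ 2) ^ l := by
        gcongr; exact one_sub_gaussianWeight_le
    _ = _ := by rw [mul_pow, pow_add ‖x₀‖, pow_mul]; ring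

end InnerProduct

/-! ### Expansion in powers of the scale -/

/-- The remainder of order `L` in the Taylor expansion of `y ↦ exp (-y)` at `0`. -/
noncomputable def expNegRemainder (L : ℕ) (y : ℝ) : ℝ :=
  Real.exp (-y) - ∑ q ∈ Finset.range L, (-y) ^ q / q !

lemma contDiff_expNegRemainder (L : ℕ) : ContDiff ℝ ∞ (expNegRemainder L) := by
  unfold expNegRemainder
  fun_prop

lemma hasDerivAt_expNegRemainder_succ (L : ℕ) (y : ℝ) :
    HasDerivAt (expNegRemainder (L + 1)) (-expNegRemainder L y) y := by
  have hexp : HasDerivAt (fun y => Real.exp (-y)) (-Real.exp (-y)) y := by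
    simpa using (hasDerivAt_neg y).exp
  have hterm (q : ℕ) :
      HasDerivAt (fun y : ℝ => (-y) ^ (q + 1) / (q + 1)!) (-((-y) ^ q / q !)) y := by
    have h := ((hasDerivAt_neg y).pow (q + 1)).div_const ((q + 1)! : ℝ)
    refine h.congr_deriv ?_
    rw [Nat.factorial_succ]
    push_cast
    field_simp
  have hsum := hexp.sub (HasDerivAt.fun_sum fun q (_ : q ∈ Finset.range L) => hterm q)
  refine ((hsum.sub_const 1).congr_deriv ?_).congr_of_eventuallyEq (.of_forall fun y => ?_)
  · rw [expNegRemainder, Finset.sum_neg_distrib]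
    ring
  · simp only [expNegRemainder, Finset.sum_range_succ', pow_zero, Nat.factorial_zero, Nat.cast_one,
      div_one, Pi.sub_apply]
    ring

lemma abs_expNegRemainder_le (L : ℕ) {y : ℝ} (hy : 0 ≤ y) : |expNegRemainder L y| ≤ y ^ L := by
  induction L generalizing y with
  | zero => simp [expNegRemainder, hy]
  | succ L ih =>
    have hzero : expNegRemainder (L + 1) 0 = 0 := by
      simp [expNegRemainder, Finset.sum_range_succ']
    have h := norm_image_sub_le_of_norm_deriv_le_segment' (C := y ^ L)
      (fun s _ => (hasDerivAt_expNegRemainder_succ L s).hasDerivWithinAt)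
      (fun s hs => by
        rw [norm_neg]
        exact (ih hs.1).trans (pow_le_pow_left₀ hs.1 hs.2.le L)) y (right_mem_Icc.2 hy)
    rwa [hzero, sub_zero, sub_zero, ← pow_succ] at h

lemma iteratedDeriv_expNegRemainder (L i : ℕ) :
    iteratedDeriv i (expNegRemainder (L + i)) = fun y => (-1) ^ i * expNegRemainder L y := by
  induction i with
  | zero => simp
  | succ i ih =>
    have hderiv : deriv (expNegRemainder (L + (i + 1))) = -expNegRemainder (L + i) :=
      funext fun y => (hasDerivAt_expNegRemainder_succ (L + i) y).deriv
    rw [iteratedDeriv_succ', hderiv]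
    ext y
    rw [iteratedDeriv_neg, ih, pow_succ]
    ring

lemma hasDerivBound_expNegRemainder (n l : ℕ) {y : ℝ} (hy : 0 ≤ y) :
    HasDerivBound (expNegRemainder (n + l + 1)) y n (y ^ l * (1 + y) ^ (n + 1)) 1 := by
  refine ⟨(contDiff_expNegRemainder _).contDiffAt.of_le (by exact_mod_cast le_top), fun i hi => ?_⟩
  obtain ⟨d, rfl⟩ := Nat.exists_eq_add_of_le hi
  rw [norm_iteratedFDeriv_eq_norm_iteratedDeriv,
    show i + d + l + 1 = l + (d + 1) + i by ring, iteratedDeriv_expNegRemainder, norm_mul, norm_pow,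
    norm_neg, norm_one, one_pow, one_mul, mul_one]
  calc |expNegRemainder (l + (d + 1)) y| ≤ y ^ (l + (d + 1)) := abs_expNegRemainder_le _ hy
    _ = y ^ l * y ^ (d + 1) := pow_add _ _ _
    _ ≤ y ^ l * (1 + y) ^ (i + d + 1) := by
      gcongr
      exact (pow_le_pow_left₀ hy (by linarith) _).trans
        (pow_le_pow_right₀ (by linarith) (by omega))

lemma exists_hasDerivBound_expNegRemainder_sq {E : Type*} [NormedAddCommGroup E]
    [InnerProductSpace ℝ E] [FiniteDimensional ℝ E] (n l : ℕ) (R : ℝ) :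
    ∃ C, 0 ≤ C ∧ ∀ (μ : ℝ) (x : E), 0 ≤ μ → ‖x‖ ≤ R →
      HasDerivBound (fun y : E => expNegRemainder (n + l + 1) (μ * ‖y‖ ^ 2)) x n
        (C * ‖x‖ ^ (2 * l) * (1 + μ) ^ (2 * n + 1) * μ ^ l) 1 := by
  obtain ⟨C, hC1, hC⟩ := exists_hasDerivBound isOpen_univ
    (contDiff_norm_sq ℝ (E := E)).contDiffOn (isCompact_closedBall 0 R) (subset_univ _) n
  refine ⟨n ! * (1 + R ^ 2) ^ (n + 1) * C ^ n, by positivity, fun μ x hμ hx => ?_⟩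
  have hM : 1 ≤ C * (1 + μ) := one_le_mul_of_one_le_of_one_le hC1 (by linarith)
  have inner : HasDerivBound (fun y : E => μ * ‖y‖ ^ 2) x n (C * (1 + μ)) 1 := by
    have h := (hC x (mem_closedBall_zero_iff.2 hx)).const_smul μ
    simp only [smul_eq_mul, abs_of_nonneg hμ] at h
    exact h.mono (by nlinarith) zero_le_one le_rfl
  have h := HasDerivBound.comp (f := fun y : E => μ * ‖y‖ ^ 2)
    (hasDerivBound_expNegRemainder n l (by positivity)) inner hM zero_le_one
  have hsq : ‖x‖ ^ 2 ≤ R ^ 2 := by gcongr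
  have hgrowth : 1 + μ * ‖x‖ ^ 2 ≤ (1 + R ^ 2) * (1 + μ) := by nlinarith
  refine (h.to_unit_scale (by rwa [mul_one])).mono ?_ zero_le_one le_rfl
  calc n ! * ((μ * ‖x‖ ^ 2) ^ l * (1 + μ * ‖x‖ ^ 2) ^ (n + 1)) * (C * (1 + μ) * 1) ^ n
      ≤ n ! * ((μ * ‖x‖ ^ 2) ^ l * ((1 + R ^ 2) * (1 + μ)) ^ (n + 1)) * (C * (1 + μ) * 1) ^ n := by
        gcongr
    _ = _ := by simp only [mul_pow, pow_mul, pow_succ, one_pow]; ring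

/-- Expansion `f μ = ∑ q ∈ range (L + 1), μ ^ q • v q + error` with `v 0 = f₀` of a family of
functions in powers of the scale `μ`, in the `C^n` sense at the point `x`; the error is
`A * (1 + μ) ^ p * μ ^ l`. -/
def HasScaleExpansion (f : ℝ → E → F) (f₀ : E → F) (x : E) (n L p l : ℕ) (A : ℝ) : Prop :=
  ∃ v : ℕ → E → F, v 0 = f₀ ∧ (∀ q, ContDiffAt ℝ n (v q) x) ∧ ∀ μ > 0, HasDerivBound
    (fun y => f μ y - ∑ q ∈ Finset.range (L + 1), μ ^ q • v q y) x n (A * (1 + μ) ^ p * μ ^ l) 1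

namespace HasScaleExpansion

variable {f : ℝ → E → F} {f₀ : E → F} {x : E} {n L p l : ℕ} {A : ℝ}

lemma congr {g : ℝ → E → F} (h : HasScaleExpansion f f₀ x n L p l A)
    (hfg : ∀ μ > 0, g μ =ᶠ[𝓝 x] f μ) : HasScaleExpansion g f₀ x n L p l A := by
  obtain ⟨v, hv0, hv, herr⟩ := h
  exact ⟨v, hv0, hv, fun μ hμ => (herr μ hμ).congr ((hfg μ hμ).sub .rfl)⟩

lemma mono {B : ℝ} (h : HasScaleExpansion f f₀ x n L p l A) (hAB : A ≤ B) :
    HasScaleExpansion f f₀ x n L p l B := by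
  obtain ⟨v, hv0, hv, herr⟩ := h
  exact ⟨v, hv0, hv, fun μ hμ => (herr μ hμ).mono (by gcongr) zero_le_one le_rfl⟩

lemma sum {ι : Type*} {s : Finset ι} {f : ι → ℝ → E → F} {f₀ : ι → E → F} {A : ι → ℝ}
    (h : ∀ i ∈ s, HasScaleExpansion (f i) (f₀ i) x n L p l (A i)) :
    HasScaleExpansion (fun μ y => ∑ i ∈ s, f i μ y) (fun y => ∑ i ∈ s, f₀ i y) x n L p l
      (∑ i ∈ s, A i) := by
  choose! v hv0 hv herr using h
  refine ⟨fun q y => ∑ i ∈ s, v i q y, ?_, fun q => ContDiffAt.sum fun i hi => hv i hi q,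
    fun μ hμ => ?_⟩
  · ext y
    exact Finset.sum_congr rfl fun i hi => congrFun (hv0 i hi) y
  · have hsum := HasDerivBound.sum fun i hi => herr i hi μ hμ
    simpa only [Finset.sum_sub_distrib, Finset.sum_comm (s := s), ← Finset.smul_sum,
      ← Finset.sum_mul] using hsum

lemma add_error {e : ℝ → E → F} {p' : ℕ} {A' : ℝ} (h : HasScaleExpansion f f₀ x n L p l A)
    (hA : 0 ≤ A) (hA' : 0 ≤ A')
    (he : ∀ μ > 0, HasDerivBound (e μ) x n (A' * (1 + μ) ^ p' * μ ^ l) 1) :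
    HasScaleExpansion (fun μ y => f μ y + e μ y) f₀ x n L (p + p') l (A + A') := by
  obtain ⟨v, hv0, hv, herr⟩ := h
  refine ⟨v, hv0, hv, fun μ hμ => ?_⟩
  have hadd := (herr μ hμ).add (he μ hμ)
  simp only [sub_add_eq_add_sub] at hadd
  have h1 : (1 + μ) ^ p ≤ (1 + μ) ^ (p + p') := pow_le_pow_right₀ (by linarith) (by omega)
  have h2 : (1 + μ) ^ p' ≤ (1 + μ) ^ (p + p') := pow_le_pow_right₀ (by linarith) (by omega)
  refine hadd.mono ?_ zero_le_one le_rfl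
  rw [add_mul, add_mul]
  gcongr

lemma norm_iteratedFDeriv_sub_sum_le (h : HasScaleExpansion f f₀ x n L p l A) {i : ℕ} (hi : i ≤ n) :
    ∃ v : ℕ → E [×i]→L[ℝ] F, v 0 = iteratedFDeriv ℝ i f₀ x ∧ ∀ μ > 0,
      ‖iteratedFDeriv ℝ i (f μ) x - ∑ q ∈ Finset.range (L + 1), μ ^ q • v q‖ ≤
        A * (1 + μ) ^ p * μ ^ l := by
  obtain ⟨v, hv0, hv, herr⟩ := h
  refine ⟨fun q => iteratedFDeriv ℝ i (v q) x, by simp only [hv0], fun μ hμ => ?_⟩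
  have hvi (q : ℕ) : ContDiffAt ℝ i (fun y => μ ^ q • v q y) x :=
    ((hv q).of_le (by exact_mod_cast hi)).const_smul _
  have hpoly : ContDiffAt ℝ i (fun y => ∑ q ∈ Finset.range (L + 1), μ ^ q • v q y) x :=
    ContDiffAt.sum fun q _ => hvi q
  have hE := (herr μ hμ).of_le hi
  have hsplit : f μ = fun y => (f μ y - ∑ q ∈ Finset.range (L + 1), μ ^ q • v q y) +
      ∑ q ∈ Finset.range (L + 1), μ ^ q • v q y := by
    ext y; rw [sub_add_cancel]
  have hderiv : iteratedFDeriv ℝ i (f μ) x -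
      ∑ q ∈ Finset.range (L + 1), μ ^ q • iteratedFDeriv ℝ i (v q) x =
        iteratedFDeriv ℝ i (fun y => f μ y - ∑ q ∈ Finset.range (L + 1), μ ^ q • v q y) x := by
    conv_lhs => rw [hsplit]
    rw [fun_iteratedFDeriv_add_apply hE.contDiffAt hpoly,
      iteratedFDeriv_fun_sum_apply fun q _ => hvi q, sub_eq_iff_eq_add]
    refine congrArg _ (Finset.sum_congr rfl fun q _ => ?_)
    exact iteratedFDeriv_const_smul_apply' ((hv q).of_le (by exact_mod_cast hi))
  rw [hderiv]
  simpa using hE.norm_le i le_rfl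

end HasScaleExpansion

namespace IsMomentSequence

variable {b : ℕ → ℝ} (hb : IsMomentSequence b)

include hb

lemma hasSum_smul_sum_pow_smul (t : ℝ) (L : ℕ) (v : ℕ → F) :
    HasSum (fun k => b k • ∑ q ∈ Finset.range (L + 1), (2 ^ k / t) ^ q • v q) (v 0) := by
  have hterm (q : ℕ) :
      HasSum (fun k => b k • (2 ^ k / t) ^ q • v q) (if q = 0 then v 0 else 0) := by
    split_ifs with hq
    · simpa [hq] using hb.hasSum.smul_const (v 0)
    · have h := (hb.hasSum_mul_pow q hq).smul_const (t⁻¹ ^ q • v q)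
      simpa only [div_eq_mul_inv, mul_pow, mul_smul, zero_smul] using h
  have h := hasSum_sum fun q (_ : q ∈ Finset.range (L + 1)) => hterm q
  simpa [Finset.smul_sum] using h

lemma norm_tsum_smul_sub_le [CompleteSpace F] {w : ℝ → F} {v : ℕ → F} {L p l : ℕ} {A t : ℝ}
    (ht : 1 ≤ t) (hA : 0 ≤ A)
    (hw : ∀ μ > 0, ‖w μ - ∑ q ∈ Finset.range (L + 1), μ ^ q • v q‖ ≤ A * (1 + μ) ^ p * μ ^ l) :
    ‖∑' k, b k • w (2 ^ k / t) - v 0‖ ≤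
      2 ^ p * (∑' k, |b k| * (2 ^ k) ^ (p + l)) * A * t⁻¹ ^ l := by
  set err : ℕ → F := fun k =>
    b k • (w (2 ^ k / t) - ∑ q ∈ Finset.range (L + 1), (2 ^ k / t) ^ q • v q) with herr
  have hbound (k : ℕ) : ‖err k‖ ≤ 2 ^ p * A * t⁻¹ ^ l * (|b k| * (2 ^ k) ^ (p + l)) := by
    have h2k : (1 : ℝ) ≤ 2 ^ k := one_le_pow₀ one_le_two
    have hμ : 1 + (2 : ℝ) ^ k / t ≤ 2 * 2 ^ k := by
      linarith [div_le_self (zero_le_one.trans h2k) ht]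
    calc ‖err k‖ ≤ |b k| * (A * (1 + 2 ^ k / t) ^ p * (2 ^ k / t) ^ l) := by
          rw [herr, norm_smul, Real.norm_eq_abs]
          gcongr
          exact hw _ (by positivity)
      _ ≤ |b k| * (A * (2 * 2 ^ k) ^ p * (2 ^ k / t) ^ l) := by gcongr
      _ = _ := by rw [mul_pow, div_eq_mul_inv, mul_pow, pow_add]; ring
  have hsum := (hb.summable_abs (p + l)).mul_left (2 ^ p * A * t⁻¹ ^ l)
  have hmain := hb.hasSum_smul_sum_pow_smul t L v
  have herr_sum : Summable err := hsum.of_norm_bounded hbound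
  have hsplit : ∑' k, b k • w (2 ^ k / t) = ∑' k, err k + v 0 := by
    rw [← hmain.tsum_eq, ← herr_sum.tsum_add hmain.summable]
    simp only [herr, ← smul_add, sub_add_cancel]
  rw [hsplit, add_sub_cancel_right]
  refine (tsum_of_norm_bounded hsum.hasSum hbound).trans (le_of_eq ?_)
  rw [tsum_mul_left]
  ring

lemma norm_tsum_iteratedFDeriv_sub_le [CompleteSpace F] {f : ℝ → E → F} {f₀ : E → F} {x : E}
    {n L p l i : ℕ} {A t : ℝ} (ht : 1 ≤ t) (hA : 0 ≤ A) (h : HasScaleExpansion f f₀ x n L p l A)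
    (hi : i ≤ n) :
    ‖∑' k, b k • iteratedFDeriv ℝ i (f (2 ^ k / t)) x - iteratedFDeriv ℝ i f₀ x‖ ≤
      2 ^ p * (∑' k, |b k| * (2 ^ k) ^ (p + l)) * A * t⁻¹ ^ l := by
  obtain ⟨v, hv0, hv⟩ := h.norm_iteratedFDeriv_sub_sum_le hi
  rw [← hv0]
  exact hb.norm_tsum_smul_sub_le (w := fun μ => iteratedFDeriv ℝ i (f μ) x) ht hA hv

end IsMomentSequence

section InnerProduct

variable {E F : Type*} [NormedAddCommGroup E] [InnerProductSpace ℝ E] [NormedAddCommGroup F]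
  [NormedSpace ℝ F]

lemma exists_hasScaleExpansion_gaussianWeight_smul [FiniteDimensional ℝ E] (a n l : ℕ) (R : ℝ) :
    ∃ C, 0 ≤ C ∧ ∀ (Q : E → F) (x : E) (A : ℝ), ‖x‖ ≤ R → HasDerivBound Q x n A 1 →
      HasScaleExpansion (fun μ y => gaussianWeight (a * μ) y • Q y) Q x n (n + l) (2 * n + 1) l
        (C * ‖x‖ ^ (2 * l) * A) := by
  obtain ⟨C, hC0, hC⟩ := exists_hasDerivBound_expNegRemainder_sq (E := E) n l R
  refine ⟨2 ^ n * C * (1 + a) ^ (2 * n + 1) * a ^ l, by positivity, fun Q x A hx hQ =>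
    ⟨fun q y => ((-(a * ‖y‖ ^ 2)) ^ q / q ! : ℝ) • Q y, by ext y; simp, fun q => ?_,
      fun μ hμ => ?_⟩⟩
  · have hsq : ContDiff ℝ n fun y : E => ‖y‖ ^ 2 := contDiff_norm_sq ℝ
    exact ((contDiff_const.mul hsq).neg.pow q |>.div_const _).contDiffAt.smul hQ.contDiffAt
  · have hA := hQ.nonneg
    have hscale : 1 + a * μ ≤ (1 + a) * (1 + μ) := by nlinarith [Nat.cast_nonneg (α := ℝ) a]
    refine (((hC (a * μ) x (by positivity) hx).smul hQ zero_le_one).congr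
      (.of_forall fun y => ?_)).mono ?_ zero_le_one le_rfl
    · simp only [expNegRemainder, gaussianWeight, sub_smul, Finset.sum_smul, smul_smul]
      refine congrArg₂ _ (by rw [mul_assoc]) (Finset.sum_congr rfl fun q _ => ?_)
      congr 1
      ring
    · calc 2 ^ n * (C * ‖x‖ ^ (2 * l) * (1 + a * μ) ^ (2 * n + 1) * (a * μ) ^ l * A)
          ≤ 2 ^ n * (C * ‖x‖ ^ (2 * l) * ((1 + a) * (1 + μ)) ^ (2 * n + 1) * (a * μ) ^ l * A) := by
            gcongr
        _ = _ := by rw [mul_pow, mul_pow (a : ℝ)]; ring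

lemma contDiff_mixedMoment_integrand {ρ : E → ℝ} (hρ : ContDiff ℝ ∞ ρ) (x₀ : E) {j : ℕ}
    (T : E [×j]→L[ℝ] F) (S : Finset (Fin j)) :
    ContDiff ℝ ∞ fun p : E × E => ρ p.2 • T fun k => if k ∈ S then p.1 - p.2 else p.2 - x₀ := by
  refine (hρ.comp contDiff_snd).smul (T.contDiff.comp (contDiff_pi.2 fun k => ?_))
  split_ifs <;> fun_prop

lemma multilinear_samplePoint_sub {j : ℕ} (T : E [×j]→L[ℝ] F) (μ : ℝ) (z x x₀ : E) :
    T (fun _ => samplePoint μ z x - x₀) = ∑ S : Finset (Fin j), gaussianWeight (S.card * μ) x •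
      T fun k => if k ∈ S then x - z else z - x₀ := by
  have hsplit : (fun _ : Fin j => samplePoint μ z x - x₀) =
      (fun _ => gaussianWeight μ x • (x - z)) + fun _ => z - x₀ := by
    ext1 k
    rw [Pi.add_apply, samplePoint]
    abel
  rw [hsplit, T.map_add_univ]
  refine Finset.sum_congr rfl fun S _ => ?_
  have hpow : gaussianWeight (S.card * μ) x = ∏ _k ∈ S, gaussianWeight μ x := by
    rw [Finset.prod_const, gaussianWeight, gaussianWeight, ← Real.exp_nat_mul]
    ring_nf
  rw [hpow]
  refine Eq.trans ?_ (T.toMultilinearMap.map_piecewise_smul (fun _ => gaussianWeight μ x)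
    (fun k => if k ∈ S then x - z else z - x₀) S)
  rw [← ContinuousMultilinearMap.coe_coe]
  congr 1
  ext1 k
  by_cases hk : k ∈ S <;> simp [Finset.piecewise, hk]

variable [MeasurableSpace E] {ν : Measure E} {r : ℝ} {ρ : E → ℝ}

/-- The average over `z` of the multilinear form `T` evaluated at `x - z` in the slots `S` and at
`z - x₀` in the other slots. -/
noncomputable def mixedMoment (ν : Measure E) (r : ℝ) (ρ : E → ℝ) (x₀ : E) {j : ℕ}
    (T : E [×j]→L[ℝ] F) (S : Finset (Fin j)) (x : E) : F :=
  ∫ z in closedBall 0 (3 * r / 4), ρ z • T (fun k => if k ∈ S then x - z else z - x₀) ∂ν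

variable [FiniteDimensional ℝ E] [BorelSpace E] [IsFiniteMeasureOnCompacts ν]

lemma exists_hasDerivBound_mixedMoment (hρ : ContDiff ℝ ∞ ρ) (hr : 0 < r)
    (j n : ℕ) :
    ∃ C, 0 ≤ C ∧ ∀ (T : E [×j]→L[ℝ] F) (S : Finset (Fin j)) (x₀ x : E), ‖x₀‖ ≤ r → ‖x‖ ≤ r →
      HasDerivBound (mixedMoment ν r ρ x₀ T S) x n (C * ‖T‖) 1 := by
  obtain ⟨C, hC0, hC⟩ := exists_hasDerivBound_multilinear_affine (E := E) (F := E) (G := F) j n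
    (by linarith : 1 ≤ 1 + 2 * r)
  obtain ⟨c, hc⟩ := (isCompact_closedBall (0 : E) (3 * r / 4)).exists_bound_of_continuousOn
    hρ.continuous.continuousOn
  refine ⟨ν.real (closedBall 0 (3 * r / 4)) * (|c| * C), by positivity,
    fun T S x₀ x hx₀ hx => ?_⟩
  have hdom := hasDominatedDerivs_restrict_isCompact (ν := ν) isOpen_univ isOpen_univ
    (isCompact_closedBall 0 (3 * r / 4)) (subset_univ _)
    (contDiff_mixedMoment_integrand hρ x₀ T S).contDiffOn
  refine (hdom.hasDerivBound_setIntegral (A := |c| * (C * ‖T‖)) (isCompact_closedBall 0 _)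
    (mem_univ x) fun z hz => ?_).mono (le_of_eq (by ring)) zero_le_one le_rfl
  have hzr := mem_closedBall_zero_iff.1 hz
  have hT := hC T (fun k => if k ∈ S then .id ℝ E else 0) (fun k => if k ∈ S then -z else z - x₀) x
    (fun k => by split_ifs <;> simp [ContinuousLinearMap.norm_id_le]) fun k => by
      split_ifs
      · exact (norm_add_le _ _).trans (by rw [norm_neg]; simp; linarith)
      · exact (norm_add_le _ _).trans (by simp; linarith [norm_sub_le z x₀])
  refine ((hT.const_smul (ρ z)).congr (.of_forall fun y => ?_)).mono
    (mul_le_mul_of_nonneg_right ((hc z hz).trans (le_abs_self c)) hT.nonneg) zero_le_one le_rfl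
  refine congrArg (fun v => ρ z • T v) (funext fun k => ?_)
  split_ifs <;> simp [sub_eq_add_neg]

lemma flatAverage_taylorPoly (hρ : ContDiff ℝ ∞ ρ) (μ : ℝ) (f : E → F) (x₀ : E) (N : ℕ) (x : E) :
    flatAverage ν r ρ μ (taylorPoly f x₀ N) x = ∑ j ∈ Finset.range (N + 1), ∑ S : Finset (Fin j),
      gaussianWeight (S.card * μ) x •
        mixedMoment ν r ρ x₀ ((j ! : ℝ)⁻¹ • iteratedFDeriv ℝ j f x₀) S x := by
  have hint (j : ℕ) (T : E [×j]→L[ℝ] F) (S : Finset (Fin j)) : Integrable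
      (fun z => gaussianWeight (S.card * μ) x • ρ z • T fun k => if k ∈ S then x - z else z - x₀)
      (ν.restrict (closedBall 0 (3 * r / 4))) :=
    (((contDiff_mixedMoment_integrand hρ x₀ T S).continuous.comp
      (by fun_prop : Continuous fun z : E => (x, z))).const_smul
        _).continuousOn.integrableOn_compact (isCompact_closedBall _ _)
  simp only [flatAverage, mixedMoment, taylorPoly, multilinear_samplePoint_sub, ← integral_smul]
  rw [Finset.sum_congr rfl fun j _ => (integral_finsetSum _ fun S _ => hint j _ S).symm,
    ← integral_finsetSum _ fun j _ => integrable_finsetSum _ fun S _ => hint j _ S]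
  simp only [Finset.smul_sum, smul_comm (ρ _) (gaussianWeight _ _)]

end InnerProduct

section InnerProduct

variable {E F : Type*} [NormedAddCommGroup E] [InnerProductSpace ℝ E] [NormedAddCommGroup F]
  [NormedSpace ℝ F] [CompleteSpace F] [MeasurableSpace E] {ν : Measure E}
  {r : ℝ} {ρ : E → ℝ} (hρ : IsAveragingKernel ν r ρ) (hr : 0 < r)

include hρ hr

lemma flatAverage_zero_left (f : E → F) : flatAverage ν r ρ 0 f = f := by
  ext x
  simp only [flatAverage, samplePoint_zero_left]
  rw [setIntegral_eq_integral_of_forall_compl_eq_zero fun z hz => ?_, integral_smul_const,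
    hρ.integral_eq_one, one_smul]
  have hz' : 3 * r / 4 < ‖z‖ := by simpa using hz
  rw [hρ.eq_zero z (by linarith), zero_smul]

variable [FiniteDimensional ℝ E] [BorelSpace E]

lemma exists_hasScaleExpansion_flatAverage_taylorPoly [IsFiniteMeasureOnCompacts ν] (n l N : ℕ) :
    ∃ C, 0 ≤ C ∧ ∀ (f : E → F) (x₀ : E) (A : ℝ), ‖x₀‖ ≤ r →
      (∀ j ≤ N, ‖iteratedFDeriv ℝ j f x₀‖ ≤ A) →
        HasScaleExpansion (fun μ => flatAverage ν r ρ μ (taylorPoly f x₀ N)) (taylorPoly f x₀ N)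
          x₀ n (n + l) (2 * n + 1) l (C * ‖x₀‖ ^ (2 * l) * A) := by
  choose C hC0 hC using fun a =>
    exists_hasScaleExpansion_gaussianWeight_smul (E := E) (F := F) a n l r
  choose D hD0 hD using fun j =>
    exists_hasDerivBound_mixedMoment (F := F) (ν := ν) hρ.contDiff hr j n
  refine ⟨∑ j ∈ Finset.range (N + 1), ∑ S : Finset (Fin j), C S.card * D j,
    Finset.sum_nonneg fun j _ => Finset.sum_nonneg fun S _ => mul_nonneg (hC0 _) (hD0 j),
    fun f x₀ A hx₀ hA => ?_⟩
  have hT (j : ℕ) (hj : j ∈ Finset.range (N + 1)) :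
      ‖(j ! : ℝ)⁻¹ • iteratedFDeriv ℝ j f x₀‖ ≤ A := by
    rw [norm_smul]
    refine (mul_le_of_le_one_left (norm_nonneg _) ?_).trans
      (hA j (Nat.lt_succ_iff.1 (Finset.mem_range.1 hj)))
    simpa using inv_le_one_of_one_le₀ (by exact_mod_cast j.factorial_pos : (1 : ℝ) ≤ j !)
  have hterm := HasScaleExpansion.sum fun j (hj : j ∈ Finset.range (N + 1)) =>
    HasScaleExpansion.sum fun (S : Finset (Fin j)) (_ : S ∈ Finset.univ) =>
      hC S.card (mixedMoment ν r ρ x₀ ((j ! : ℝ)⁻¹ • iteratedFDeriv ℝ j f x₀) S) x₀ (D j * A) hx₀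
        ((hD j _ S x₀ x₀ hx₀ hx₀).mono (mul_le_mul_of_nonneg_left (hT j hj) (hD0 j)) zero_le_one
          le_rfl)
  have hzero : taylorPoly f x₀ N = fun y => ∑ j ∈ Finset.range (N + 1), ∑ S : Finset (Fin j),
      mixedMoment ν r ρ x₀ ((j ! : ℝ)⁻¹ • iteratedFDeriv ℝ j f x₀) S y := by
    ext y
    conv_lhs => rw [← flatAverage_zero_left hρ hr (taylorPoly f x₀ N)]
    simp only [flatAverage_taylorPoly hρ.contDiff, mul_zero, gaussianWeight_zero_left, one_smul]
  rw [← hzero] at hterm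
  refine (hterm.congr fun μ _ => .of_forall fun y => ?_).mono (le_of_eq ?_)
  · simp only [flatAverage_taylorPoly hρ.contDiff]
  · simp only [Finset.sum_mul]
    exact Finset.sum_congr rfl fun j _ => Finset.sum_congr rfl fun S _ => by ring

lemma exists_hasScaleExpansion_flatAverage [ν.IsAddHaarMeasure] (n k l : ℕ) :
    ∃ C, 0 ≤ C ∧ ∃ p : ℕ, ∀ (f : E → F) (x₀ : E) (B : ℝ), x₀ ≠ 0 → x₀ ∈ ball 0 r →
      HasWeightedBound f r (n + l) k B →
        HasScaleExpansion (fun μ => flatAverage ν r ρ μ f) (taylorPoly f x₀ (n + l)) x₀ n (n + l) p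
          l (C * (‖x₀‖ ^ (k + 2 * l) * B)) := by
  obtain ⟨C, hC0, hC⟩ := exists_hasScaleExpansion_flatAverage_taylorPoly (F := F) hρ hr n l (n + l)
  obtain ⟨D, hD0, q, hD⟩ :=
    exists_hasDerivBound_flatAverage_sub_taylorPoly_of_weighted (F := F) hρ hr n k l
  refine ⟨C + D, by positivity, 2 * n + 1 + q, fun f x₀ B hx₀ hxr hf => ?_⟩
  have hB := hf.nonneg hxr hx₀
  have hpoly := hC f x₀ _ (mem_ball_zero_iff.1 hxr).le (hf.norm_le x₀ hxr)
  refine ((hpoly.add_error (by positivity) (by positivity) fun μ hμ =>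
    hD f μ x₀ B hμ hx₀ hxr hf).congr fun μ hμ => flatAverage_eventuallyEq_taylorPoly_add hρ hr hμ
      hxr hf.contDiffOn (n + l)).mono (le_of_eq ?_)
  rw [pow_add]
  ring

end InnerProduct

/-! ### Superposition of the scales -/

lemma IsMomentSequence.norm_tsum_smul_le {b : ℕ → ℝ} (hb : IsMomentSequence b) {w : ℝ → F}
    {p l : ℕ} {A B t : ℝ} (ht : 1 ≤ t) (hA : 0 ≤ A) (hB : 0 ≤ B)
    (hw : ∀ μ > 0, ‖w μ‖ ≤ A * (1 + μ) ^ p * (1 + μ⁻¹) ^ l * B) :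
    ‖∑' k, b k • w (2 ^ k / t)‖ ≤ A * 2 ^ (p + l) * (∑' k, |b k| * (2 ^ k) ^ p) * t ^ l * B := by
  have hbound (k : ℕ) :
      ‖b k • w (2 ^ k / t)‖ ≤ A * 2 ^ (p + l) * t ^ l * B * (|b k| * (2 ^ k) ^ p) := by
    have h2k : (1 : ℝ) ≤ 2 ^ k := one_le_pow₀ one_le_two
    have hμ : 1 + (2 : ℝ) ^ k / t ≤ 2 * 2 ^ k := by
      linarith [div_le_self (zero_le_one.trans h2k) ht]
    have hμ' : 1 + ((2 : ℝ) ^ k / t)⁻¹ ≤ 2 * t := by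
      rw [inv_div]
      linarith [div_le_self (zero_le_one.trans ht) h2k]
    calc ‖b k • w (2 ^ k / t)‖
        ≤ |b k| * (A * (1 + 2 ^ k / t) ^ p * (1 + (2 ^ k / t)⁻¹) ^ l * B) := by
          rw [norm_smul, Real.norm_eq_abs]
          gcongr
          exact hw _ (by positivity)
      _ ≤ |b k| * (A * (2 * 2 ^ k) ^ p * (2 * t) ^ l * B) := by gcongr
      _ = _ := by rw [mul_pow, mul_pow, pow_add]; ring
  refine (tsum_of_norm_bounded ((hb.summable_abs p).mul_left _).hasSum hbound).trans (le_of_eq ?_)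
  rw [tsum_mul_left]
  ring

section Series

variable {f : ℕ → E → F} {U : Set E}

lemma hasDominatedDerivs_count (hU : IsOpen U) (hf : ∀ k, ContDiffOn ℝ ∞ (f k) U)
    (hbound : ∀ n : ℕ, ∀ x ∈ U, ∃ s ∈ 𝓝 x, ∃ u : ℕ → ℝ, Summable u ∧
      ∀ k, ∀ y ∈ s, ‖iteratedFDeriv ℝ n (f k) y‖ ≤ u k) :
    HasDominatedDerivs Measure.count f U := by
  refine ⟨hU, .of_forall hf, fun n x _ => .of_discrete, fun n x hx => ?_⟩
  obtain ⟨s, hs, u, hu, hfu⟩ := hbound n x hx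
  exact ⟨s, hs, u, integrable_count_iff.2 hu.norm, .of_forall hfu⟩

variable [CompleteSpace F]

lemma integral_count_eq_tsum {u : ℕ → F} (hu : Integrable u Measure.count) :
    ∫ k, u k ∂Measure.count = ∑' k, u k := by
  simp [integral_countable hu]

namespace HasDominatedDerivs

lemma integral_count_eqOn (h : HasDominatedDerivs Measure.count f U) :
    EqOn (fun y => ∑' k, f k y) (fun y => ∫ k, f k y ∂Measure.count) U := fun _ hy =>
  (integral_count_eq_tsum (h.integrable hy)).symm

lemma contDiffOn_tsum (h : HasDominatedDerivs Measure.count f U) :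
    ContDiffOn ℝ ∞ (fun y => ∑' k, f k y) U :=
  h.contDiffOn_integral.congr h.integral_count_eqOn

lemma iteratedFDeriv_tsum (h : HasDominatedDerivs Measure.count f U) (n : ℕ) {x : E} (hx : x ∈ U) :
    iteratedFDeriv ℝ n (fun y => ∑' k, f k y) x = ∑' k, iteratedFDeriv ℝ n (f k) x := by
  rw [((h.integral_count_eqOn.eventuallyEq_of_mem (h.isOpen.mem_nhds hx)).iteratedFDeriv (𝕜 := ℝ)
      n).self_of_nhds, h.iteratedFDeriv_integral n hx,
    integral_count_eq_tsum (h.integrable_iteratedFDeriv n hx)]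

end HasDominatedDerivs

end Series

section InnerProduct

variable {E F : Type*} [NormedAddCommGroup E] [InnerProductSpace ℝ E] [NormedAddCommGroup F]
  [NormedSpace ℝ F] [MeasurableSpace E] {ν : Measure E} {r : ℝ} {ρ : E → ℝ} {b : ℕ → ℝ} {t : ℝ}
  {f : E → F}

/-- The smoothing operator: the superposition, with weights `b k`, of the averages `flatAverage` at
the scales `2 ^ k / t`. -/
noncomputable def flatSmoothing (ν : Measure E) (r : ℝ) (ρ : E → ℝ) (b : ℕ → ℝ) (t : ℝ) (f : E → F)
    (x : E) : F :=
  ∑' k, b k • flatAverage ν r ρ (2 ^ k / t) f x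

lemma flatSmoothing_const_smul (c : ℝ) (f : E → F) :
    flatSmoothing ν r ρ b t (c • f) = c • flatSmoothing ν r ρ b t f := by
  ext x
  simp only [flatSmoothing, flatAverage, Pi.smul_apply, smul_comm _ c, integral_smul,
    tsum_const_smul'']

variable [FiniteDimensional ℝ E] [BorelSpace E]

lemma exists_hasDerivBound_flatAverage_nhds [IsFiniteMeasureOnCompacts ν] (hρ : ContDiff ℝ ∞ ρ)
    (hr : 0 < r) (hf : ContDiffOn ℝ ∞ f (ball 0 r)) {μ₀ : ℝ} (hμ₀ : 0 ≤ μ₀) {x : E}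
    (hx : x ∈ samplingDomain E r (7 * r / 8) μ₀) (n : ℕ) :
    ∃ s ∈ 𝓝 x, ∃ C, ∀ y ∈ s, ∀ μ ≥ μ₀,
      HasDerivBound (flatAverage ν r ρ μ f) y n (C * (1 + μ) ^ n) 1 := by
  obtain ⟨q, hq, hqr⟩ := exists_between (max_lt hx (by linarith : 7 * r / 8 < r))
  have hxq : x ∈ samplingDomain E q (7 * r / 8) μ₀ := (le_max_left _ _).trans_lt hq
  have hrq : 7 * r / 8 < q := (le_max_right _ _).trans_lt hq
  obtain ⟨A, -, hA⟩ := exists_hasDerivBound isOpen_ball hf (isCompact_closedBall (0 : E) q)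
    (closedBall_subset_ball hqr) n
  obtain ⟨C, -, hC⟩ := exists_hasDerivBound_flatAverage (F := F) (ν := ν) hρ hr n (‖x‖ + 1)
  refine ⟨_, inter_mem (ball_mem_nhds x one_pos) (isOpen_samplingDomain.mem_nhds hxq), C * A,
    fun y hy μ hμ => ?_⟩
  have hyq := samplingDomain_mono hrq hμ₀ hμ hy.2
  have hyx : ‖y‖ ≤ ‖x‖ + 1 := by
    linarith [norm_le_norm_add_norm_sub' y x, (mem_ball_iff_norm.1 hy.1).le]
  refine (hC f μ y A (hμ₀.trans hμ) hyx (lt_trans hyq hqr) hf fun z hz => hA _ ?_).mono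
    (le_of_eq (by ring)) zero_le_one le_rfl
  exact ball_subset_closedBall (samplePoint_mem_ball (hμ₀.trans hμ) hyq (hz.trans (by linarith)))

lemma hasDominatedDerivs_flatSmoothing [IsFiniteMeasureOnCompacts ν] (hρ : ContDiff ℝ ∞ ρ)
    (hr : 0 < r) (hb : IsMomentSequence b) (ht : 1 ≤ t) (hf : ContDiffOn ℝ ∞ f (ball 0 r)) :
    HasDominatedDerivs Measure.count (fun k x => b k • flatAverage ν r ρ (2 ^ k / t) f x)
      (samplingDomain E r (7 * r / 8) t⁻¹) := by
  have ht0 : 0 < t := by linarith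
  have hscale (k : ℕ) : t⁻¹ ≤ 2 ^ k / t := by
    rw [inv_eq_one_div]; gcongr; exact one_le_pow₀ one_le_two
  refine hasDominatedDerivs_count isOpen_samplingDomain (fun k => ?_) fun n x hx => ?_
  · exact ((hasDominatedDerivs_flatAverage hρ hr (by positivity) hf).contDiffOn_integral.mono
      (samplingDomain_mono (by linarith) (by positivity) (hscale k))).const_smul (b k)
  · obtain ⟨s, hs, C, hC⟩ := exists_hasDerivBound_flatAverage_nhds (ν := ν) hρ hr hf
      (inv_nonneg.2 ht0.le) hx n
    have hC0 : 0 ≤ C := by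
      have h := (hC x (mem_of_mem_nhds hs) t⁻¹ le_rfl).nonneg
      exact nonneg_of_mul_nonneg_left h (by positivity)
    refine ⟨s, hs, fun k => C * 2 ^ n * (|b k| * (2 ^ k) ^ n), (hb.summable_abs n).mul_left _,
      fun k y hy => ?_⟩
    have h2k : (1 : ℝ) ≤ 2 ^ k := one_le_pow₀ one_le_two
    have hμ : 1 + (2 : ℝ) ^ k / t ≤ 2 * 2 ^ k := by
      linarith [div_le_self (zero_le_one.trans h2k) ht]
    calc _ ≤ |b k| * (C * (1 + 2 ^ k / t) ^ n) * 1 ^ n :=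
          ((hC y hy _ (hscale k)).const_smul (b k)).norm_le n le_rfl
      _ ≤ |b k| * (C * (2 * 2 ^ k) ^ n) * 1 ^ n := by gcongr
      _ = _ := by rw [mul_pow]; ring

variable [CompleteSpace F]

section Operator

variable [IsFiniteMeasureOnCompacts ν] (hρ : ContDiff ℝ ∞ ρ) (hr : 0 < r)
  (hb : IsMomentSequence b) (ht : 1 ≤ t) (hf : ContDiffOn ℝ ∞ f (ball 0 r))

include hρ hr hb ht hf

lemma contDiffOn_flatSmoothing :
    ContDiffOn ℝ ∞ (flatSmoothing ν r ρ b t f) (closedBall 0 r) :=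
  (hasDominatedDerivs_flatSmoothing hρ hr hb ht hf).contDiffOn_tsum.mono
    (closedBall_subset_samplingDomain hr (by linarith) (by positivity))

lemma iteratedFDeriv_flatSmoothing {x : E} (hx : x ∈ closedBall 0 r) (i : ℕ) :
    iteratedFDeriv ℝ i (flatSmoothing ν r ρ b t f) x =
      ∑' k, b k • iteratedFDeriv ℝ i (flatAverage ν r ρ (2 ^ k / t) f) x := by
  have hmem (μ : ℝ) (hμ : 0 < μ) : x ∈ samplingDomain E r (7 * r / 8) μ :=
    closedBall_subset_samplingDomain hr (by linarith) hμ hx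
  refine ((hasDominatedDerivs_flatSmoothing hρ hr hb ht hf).iteratedFDeriv_tsum i
    (hmem _ (by positivity))).trans (tsum_congr fun k => iteratedFDeriv_const_smul_apply' ?_)
  have hμ : (0 : ℝ) < 2 ^ k / t := by positivity
  exact ((hasDominatedDerivs_flatAverage hρ hr hμ.le hf).contDiffOn_integral.contDiffAt
    (isOpen_samplingDomain.mem_nhds (hmem _ hμ))).of_le (by exact_mod_cast le_top)

lemma flatSmoothing_add {g : E → F} (hg : ContDiffOn ℝ ∞ g (ball 0 r)) {x : E}
    (hx : x ∈ closedBall 0 r) :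
    flatSmoothing ν r ρ b t (f + g) x =
      flatSmoothing ν r ρ b t f x + flatSmoothing ν r ρ b t g x := by
  have hmem (μ : ℝ) (hμ : 0 < μ) : x ∈ samplingDomain E r (7 * r / 8) μ :=
    closedBall_subset_samplingDomain hr (by linarith) hμ hx
  have hsum {h : E → F} (hh : ContDiffOn ℝ ∞ h (ball 0 r)) :
      Summable fun k => b k • flatAverage ν r ρ (2 ^ k / t) h x :=
    .of_norm (integrable_count_iff.1 ((hasDominatedDerivs_flatSmoothing hρ hr hb ht hh).integrable
      (hmem t⁻¹ (by positivity))))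
  have hadd (k : ℕ) : flatAverage ν r ρ (2 ^ k / t) (f + g) x =
      flatAverage ν r ρ (2 ^ k / t) f x + flatAverage ν r ρ (2 ^ k / t) g x :=
    flatAverage_add hρ hr (by positivity) hf hg (hmem _ (by positivity))
  simp only [flatSmoothing, hadd, smul_add, (hsum hf).tsum_add (hsum hg)]

lemma iteratedFDeriv_flatSmoothing_zero (hf0 : ∀ i, iteratedFDeriv ℝ i f 0 = 0) (i : ℕ) :
    iteratedFDeriv ℝ i (flatSmoothing ν r ρ b t f) 0 = 0 := by
  obtain ⟨C, -, hC⟩ := exists_hasDerivBound_flatAverage (F := F) (ν := ν) hρ hr i 0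
  have h0 : (0 : E) ∈ ball 0 r := mem_ball_self hr
  rw [iteratedFDeriv_flatSmoothing hρ hr hb ht hf (ball_subset_closedBall h0)]
  refine (tsum_congr fun k => ?_).trans tsum_zero
  have hμ : (0 : ℝ) < 2 ^ k / t := by positivity
  have hflat : HasDerivBound f 0 i 0 1 :=
    ⟨(hf.contDiffAt (isOpen_ball.mem_nhds h0)).of_le (by exact_mod_cast le_top),
      fun j _ => by simp [hf0]⟩
  have h := (hC f _ 0 0 hμ.le norm_zero.le (closedBall_subset_samplingDomain hr (by linarith) hμ
    (ball_subset_closedBall h0)) hf fun z _ => by rwa [samplePoint_zero_right]).norm_le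
      i le_rfl
  have hzero : iteratedFDeriv ℝ i (flatAverage ν r ρ (2 ^ k / t) f) 0 = 0 :=
    norm_le_zero_iff.1 (by simpa using h)
  rw [hzero, smul_zero]

end Operator

section Estimates

variable [ν.IsAddHaarMeasure] (hρ : IsAveragingKernel ν r ρ) (hr : 0 < r) (hb : IsMomentSequence b)

include hρ hr hb

lemma exists_norm_iteratedFDeriv_flatSmoothing_le (n k l : ℕ) :
    ∃ C, 0 ≤ C ∧ ∀ (f : E → F) (t : ℝ) (x : E) (B : ℝ), 1 ≤ t → x ≠ 0 → x ∈ ball 0 r →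
      HasWeightedBound f r n (k + 2 * l) B → ∀ i ≤ n + l,
        ‖iteratedFDeriv ℝ i (flatSmoothing ν r ρ b t f) x‖ ≤ C * t ^ l * B * ‖x‖ ^ k := by
  obtain ⟨C, hC0, q, hC⟩ := exists_hasDerivBound_flatAverage_of_weighted (F := F) hρ hr n k l
  refine ⟨C * 2 ^ (q + l) * ∑' k, |b k| * (2 ^ k) ^ q,
    mul_nonneg (by positivity) (tsum_nonneg fun k => by positivity),
    fun f t x B ht hx0 hx hf i hi => ?_⟩
  have hB := hf.nonneg hx hx0
  rw [iteratedFDeriv_flatSmoothing hρ.contDiff hr hb ht hf.contDiffOn (ball_subset_closedBall hx)]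
  refine (hb.norm_tsum_smul_le (w := fun μ => iteratedFDeriv ℝ i (flatAverage ν r ρ μ f) x)
    (p := q) (l := l) (B := ‖x‖ ^ k * B) ht hC0 (by positivity) fun μ hμ => ?_).trans
      (le_of_eq (by ring))
  simpa using (hC f μ x B hμ hx0 hx hf).norm_le i hi

lemma exists_norm_iteratedFDeriv_flatSmoothing_sub_le (n k l : ℕ) :
    ∃ C, 0 ≤ C ∧ ∀ (f : E → F) (t : ℝ) (x : E) (B : ℝ), 1 ≤ t → x ≠ 0 → x ∈ ball 0 r →
      HasWeightedBound f r (n + l) k B → ∀ i ≤ n,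
        ‖iteratedFDeriv ℝ i (flatSmoothing ν r ρ b t f - f) x‖ ≤
          C * t⁻¹ ^ l * B * ‖x‖ ^ (k + 2 * l) := by
  obtain ⟨C, hC0, p, hC⟩ := exists_hasScaleExpansion_flatAverage (F := F) hρ hr n k l
  refine ⟨2 ^ p * (∑' k, |b k| * (2 ^ k) ^ (p + l)) * C,
    mul_nonneg (mul_nonneg (by positivity) (tsum_nonneg fun k => by positivity)) hC0,
    fun f t x B ht hx0 hx hf i hi => ?_⟩
  have hB := hf.nonneg hx hx0
  have hfx : ContDiffAt ℝ ∞ f x := hf.contDiffOn.contDiffAt (isOpen_ball.mem_nhds hx)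
  have hSx := (contDiffOn_flatSmoothing (ν := ν) hρ.contDiff hr hb ht hf.contDiffOn).contDiffAt
    (closedBall_mem_nhds_of_mem hx)
  rw [iteratedFDeriv_sub_apply (hSx.of_le (by exact_mod_cast le_top))
      (hfx.of_le (by exact_mod_cast le_top)),
    iteratedFDeriv_flatSmoothing hρ.contDiff hr hb ht hf.contDiffOn (ball_subset_closedBall hx),
    ← iteratedFDeriv_taylorPoly (hfx.of_le (by exact_mod_cast le_top)) (by omega : i ≤ n + l)]
  exact (hb.norm_tsum_iteratedFDeriv_sub_le ht (by positivity) (hC f x B hx0 hx hf) hi).trans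
    (le_of_eq (by ring))

end Estimates

end InnerProduct

/-! ### Flat functions on the closed ball -/

lemma uniqueDiffOn_closedBall (x : E) {r : ℝ} (hr : 0 < r) : UniqueDiffOn ℝ (closedBall x r) :=
  uniqueDiffOn_convex (convex_closedBall x r)
    (by simpa only [interior_closedBall x hr.ne'] using nonempty_ball.2 hr)

lemma iteratedFDerivWithin_closedBall (f : E → F) {x y : E} {r : ℝ} (hy : y ∈ ball x r) (i : ℕ) :
    iteratedFDerivWithin ℝ i f (closedBall x r) y = iteratedFDeriv ℝ i f y := by
  rw [← iteratedFDerivWithin_univ]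
  exact iteratedFDerivWithin_congr_set (eventuallyEq_univ.2 (closedBall_mem_nhds_of_mem hy)) i

lemma norm_iteratedFDerivWithin_closedBall_le {f : E → F} {x : E} {r : ℝ} (hr : 0 < r)
    (hf : ContDiffOn ℝ ∞ f (closedBall x r)) {i : ℕ} {u : E → ℝ} (hu : Continuous u)
    (h : ∀ y ∈ ball x r, ‖iteratedFDeriv ℝ i f y‖ ≤ u y) :
    ∀ y ∈ closedBall x r, ‖iteratedFDerivWithin ℝ i f (closedBall x r) y‖ ≤ u y := by
  intro y hy
  have hcont := (hf.continuousOn_iteratedFDerivWithin (m := i) (by exact_mod_cast le_top)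
    (uniqueDiffOn_closedBall x hr)).norm
  refine ContinuousWithinAt.closure_le (s := ball x r) (by rwa [closure_ball x hr.ne'])
    ((hcont y hy).mono ball_subset_closedBall) hu.continuousWithinAt fun z hz => ?_
  rw [iteratedFDerivWithin_closedBall f hz]
  exact h z hz

lemma exists_isAveragingKernel {E : Type*} [NormedAddCommGroup E] [InnerProductSpace ℝ E]
    [FiniteDimensional ℝ E] [MeasurableSpace E] [BorelSpace E] (ν : Measure E) [ν.IsAddHaarMeasure]
    {r : ℝ} (hr : 0 < r) : ∃ ρ, IsAveragingKernel ν r ρ := by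
  let bump : ContDiffBump (0 : E) := ⟨r / 4, r / 2, by positivity, by linarith⟩
  refine ⟨bump.normed ν, bump.contDiff_normed, fun z hz => ?_, bump.integral_normed⟩
  rw [← notMem_support, bump.support_normed_eq, mem_ball_zero_iff]
  exact hz.not_gt

section FlatSmoothOnBall

variable {m : ℕ} {r : ℝ} {f g : EuclideanSpace ℝ (Fin m) → ℝ}

lemma flatSmoothOnBall_iff (hr : 0 < r) :
    FlatSmoothOnBall m r f ↔
      ContDiffOn ℝ ∞ f (closedBall 0 r) ∧ ∀ i, iteratedFDeriv ℝ i f 0 = 0 := by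
  simp only [FlatSmoothOnBall, iteratedFDerivWithin_closedBall f (mem_ball_self hr)]

lemma _root_.FlatSmoothOnBall.congr (hr : 0 < r) (hf : FlatSmoothOnBall m r f)
    (hgf : EqOn g f (closedBall 0 r)) : FlatSmoothOnBall m r g :=
  ⟨hf.1.congr hgf, fun i =>
    (iteratedFDerivWithin_congr hgf (mem_closedBall_self hr.le) i).trans (hf.2 i)⟩

lemma _root_.FlatSmoothOnBall.contDiffAt (hf : FlatSmoothOnBall m r f)
    {x : EuclideanSpace ℝ (Fin m)} (hx : x ∈ ball 0 r) {n : ℕ} : ContDiffAt ℝ n f x :=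
  (hf.1.contDiffAt (closedBall_mem_nhds_of_mem hx)).of_le (by exact_mod_cast le_top)

/-- The space `C^∞₀(B̄_r)` of smooth functions flat at the origin, as a submodule of the space of
all functions. Values outside the closed ball are unconstrained. -/
def flatSmoothSubmodule (m : ℕ) {r : ℝ} (hr : 0 < r) :
    Submodule ℝ (EuclideanSpace ℝ (Fin m) → ℝ) where
  carrier := {f | FlatSmoothOnBall m r f}
  zero_mem' := (flatSmoothOnBall_iff hr).2 ⟨contDiffOn_const, fun i => by
    rw [Pi.zero_def, iteratedFDeriv_fun_zero, Pi.zero_apply]⟩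
  add_mem' {f g} hf hg := (flatSmoothOnBall_iff hr).2 ⟨hf.1.add hg.1, fun i => by
    rw [iteratedFDeriv_add_apply (hf.contDiffAt (mem_ball_self hr))
      (hg.contDiffAt (mem_ball_self hr)), ((flatSmoothOnBall_iff hr).1 hf).2,
      ((flatSmoothOnBall_iff hr).1 hg).2, add_zero]⟩
  smul_mem' c f hf := (flatSmoothOnBall_iff hr).2 ⟨hf.1.const_smul c, fun i => by
    rw [iteratedFDeriv_const_smul_apply (hf.contDiffAt (mem_ball_self hr)),
      ((flatSmoothOnBall_iff hr).1 hf).2, smul_zero]⟩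

lemma _root_.FlatSmoothOnBall.exists_norm_iteratedFDerivWithin_le (hr : 0 < r)
    (hf : FlatSmoothOnBall m r f) (i k : ℕ) :
    ∃ M, ∀ x ∈ closedBall 0 r,
      ‖iteratedFDerivWithin ℝ i f (closedBall 0 r) x‖ ≤ M * ‖x‖ ^ k := by
  have hcont := hf.1.continuousOn_iteratedFDerivWithin (m := (i + k : ℕ))
    (by exact_mod_cast le_top) (uniqueDiffOn_closedBall 0 hr)
  obtain ⟨M, hM⟩ := (isCompact_closedBall 0 r).exists_bound_of_continuousOn hcont
  refine ⟨M, norm_iteratedFDerivWithin_closedBall_le hr hf.1 (by fun_prop) fun x hx => ?_⟩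
  have h := norm_iteratedFDeriv_le_of_vanishing (N := i + k) (M := M)
    (fun y hy => hf.contDiffAt hy) (convex_ball 0 r) (mem_ball_self hr)
    (fun j _ => ((flatSmoothOnBall_iff hr).1 hf).2 j)
    (fun y hy => by
      rw [← iteratedFDerivWithin_closedBall f hy]; exact hM y (ball_subset_closedBall hy))
    (k.le_add_left i) x hx
  rwa [Nat.add_sub_cancel, sub_zero] at h

lemma flatNorm_nonneg (n k : ℕ) (f : EuclideanSpace ℝ (Fin m) → ℝ) : 0 ≤ flatNorm m r n k f :=
  Real.iSup_nonneg fun p => by positivity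

lemma flatNorm_congr (hgf : EqOn g f (closedBall 0 r)) (n k : ℕ) :
    flatNorm m r n k g = flatNorm m r n k f :=
  iSup_congr fun p => by rw [iteratedFDerivWithin_congr hgf p.1.2.1]

lemma zpow_neg_norm_mul_le_iff {E : Type*} [NormedAddCommGroup E] {x : E} (hx : x ≠ 0)
    {k : ℕ} {a c : ℝ} :
    ‖x‖ ^ (-(k : ℤ)) * a ≤ c ↔ a ≤ c * ‖x‖ ^ k := by
  rw [zpow_neg, zpow_natCast, inv_mul_le_iff₀ (pow_pos (norm_pos_iff.2 hx) k), mul_comm]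

lemma flatNorm_le (hr : 0 < r) (hf : FlatSmoothOnBall m r f) {n k : ℕ} {c : ℝ} (hc : 0 ≤ c)
    (h : ∀ x ∈ ball 0 r, x ≠ 0 → ∀ i ≤ n, ‖iteratedFDeriv ℝ i f x‖ ≤ c * ‖x‖ ^ k) :
    flatNorm m r n k f ≤ c := by
  refine Real.iSup_le (fun p => ?_) hc
  refine (zpow_neg_norm_mul_le_iff p.1.2.2).2 (norm_iteratedFDerivWithin_closedBall_le hr hf.1
    (by fun_prop : Continuous fun x : EuclideanSpace ℝ (Fin m) => c * ‖x‖ ^ k)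
    (fun x hx => ?_) p.1 p.1.2.1)
  obtain rfl | hx0 := eq_or_ne x 0
  · rw [((flatSmoothOnBall_iff hr).1 hf).2, norm_zero]
    positivity
  · exact h x hx hx0 p.2 (by omega)

lemma _root_.FlatSmoothOnBall.hasWeightedBound_flatNorm (hr : 0 < r) (hf : FlatSmoothOnBall m r f)
    (n k : ℕ) : HasWeightedBound f r n k (flatNorm m r n k f) := by
  refine ⟨hf.1.mono ball_subset_closedBall, fun y hy i hi => ?_⟩
  obtain rfl | hy0 := eq_or_ne y 0
  · rw [((flatSmoothOnBall_iff hr).1 hf).2, norm_zero]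
    exact mul_nonneg (flatNorm_nonneg n k f) (by positivity)
  choose M hM using fun j : Fin (n + 1) => hf.exists_norm_iteratedFDerivWithin_le hr j k
  obtain ⟨A, hA⟩ := (finite_range M).bddAbove
  rw [← iteratedFDerivWithin_closedBall f hy, ← zpow_neg_norm_mul_le_iff hy0]
  refine le_ciSup_of_le ⟨A, ?_⟩ (⟨y, ball_subset_closedBall hy, hy0⟩, ⟨i, by omega⟩) le_rfl
  rintro _ ⟨p, rfl⟩
  exact ((zpow_neg_norm_mul_le_iff p.1.2.2).2 (hM p.2 p.1 p.1.2.1)).trans (hA (mem_range_self p.2))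

section Smoothing

variable {ρ : EuclideanSpace ℝ (Fin m) → ℝ} {b : ℕ → ℝ} (hr : 0 < r) (hb : IsMomentSequence b)

include hr hb

lemma _root_.FlatSmoothOnBall.flatSmoothing (hρ : ContDiff ℝ ∞ ρ) (hf : FlatSmoothOnBall m r f)
    {t : ℝ} (ht : 1 ≤ t) : FlatSmoothOnBall m r (flatSmoothing volume r ρ b t f) :=
  (flatSmoothOnBall_iff hr).2
    ⟨contDiffOn_flatSmoothing hρ hr hb ht (hf.1.mono ball_subset_closedBall),
      iteratedFDeriv_flatSmoothing_zero hρ hr hb ht (hf.1.mono ball_subset_closedBall)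
        ((flatSmoothOnBall_iff hr).1 hf).2⟩

lemma exists_linearMap_eqOn_flatSmoothing (hρ : ContDiff ℝ ∞ ρ) {t : ℝ} (ht : 1 ≤ t) :
    ∃ S : (EuclideanSpace ℝ (Fin m) → ℝ) →ₗ[ℝ] (EuclideanSpace ℝ (Fin m) → ℝ),
      ∀ f, FlatSmoothOnBall m r f →
        EqOn (S f) (flatSmoothing volume r ρ b t f) (closedBall 0 r) := by
  have hsmooth (f : flatSmoothSubmodule m hr) : ContDiffOn ℝ ∞ f.1 (ball 0 r) :=
    f.2.1.mono ball_subset_closedBall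
  let L : flatSmoothSubmodule m hr →ₗ[ℝ] (EuclideanSpace ℝ (Fin m) → ℝ) :=
    { toFun := fun f => (closedBall 0 r).indicator (flatSmoothing volume r ρ b t f)
      map_add' := fun f g => by
        rw [← indicator_add']
        exact indicator_congr fun x hx =>
          flatSmoothing_add hρ hr hb ht (hsmooth f) (hsmooth g) hx
      map_smul' := fun c f => by
        rw [RingHom.id_apply, SetLike.val_smul, flatSmoothing_const_smul]
        exact indicator_const_smul _ c _ }
  obtain ⟨S, hS⟩ := L.exists_extend
  refine ⟨S, fun f hf x hx => ?_⟩
  have hSf : S f = L ⟨f, hf⟩ := LinearMap.congr_fun hS ⟨f, hf⟩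
  rw [hSf]
  exact indicator_of_mem hx _

variable (hρ : IsAveragingKernel volume r ρ)

include hρ

lemma exists_flatNorm_flatSmoothing_le (n k l : ℕ) :
    ∃ C, 0 ≤ C ∧ ∀ f, FlatSmoothOnBall m r f → ∀ t : ℝ, 1 ≤ t →
      flatNorm m r (n + l) k (flatSmoothing volume r ρ b t f) ≤
        C * (t ^ l * flatNorm m r n (k + 2 * l) f) := by
  obtain ⟨C, hC0, hC⟩ := exists_norm_iteratedFDeriv_flatSmoothing_le (F := ℝ) hρ hr hb n k l
  refine ⟨C, hC0, fun f hf t ht => flatNorm_le hr (hf.flatSmoothing hr hb hρ.contDiff ht) ?_ ?_⟩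
  · exact mul_nonneg hC0 (mul_nonneg (by positivity) (flatNorm_nonneg _ _ f))
  · intro x hx hx0 i hi
    rw [← mul_assoc]
    exact hC f t x _ ht hx0 hx (hf.hasWeightedBound_flatNorm hr _ _) i hi

lemma exists_flatNorm_flatSmoothing_sub_le (n k l : ℕ) :
    ∃ C, 0 ≤ C ∧ ∀ f, FlatSmoothOnBall m r f → ∀ t : ℝ, 1 ≤ t →
      flatNorm m r n (k + 2 * l) (flatSmoothing volume r ρ b t f - f) ≤
        C * (t ^ (-(l : ℤ)) * flatNorm m r (n + l) k f) := by
  obtain ⟨C, hC0, hC⟩ := exists_norm_iteratedFDeriv_flatSmoothing_sub_le (F := ℝ) hρ hr hb n k l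
  refine ⟨C, hC0, fun f hf t ht => flatNorm_le hr
    ((flatSmoothSubmodule m hr).sub_mem (hf.flatSmoothing hr hb hρ.contDiff ht) hf) ?_ ?_⟩
  · exact mul_nonneg hC0 (mul_nonneg (by positivity) (flatNorm_nonneg _ _ f))
  · intro x hx hx0 i hi
    rw [← mul_assoc, zpow_neg, zpow_natCast, ← inv_pow]
    exact hC f t x _ ht hx0 hx (hf.hasWeightedBound_flatNorm hr _ _) i hi

end Smoothing

end FlatSmoothOnBall

end FlatSmoothing

/-- for each `m ≥ 1` and `r > 0` there is a family of linear smoothing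
operators `S_t : C^∞₀(B̄_r) → C^∞₀(B̄_r)` (`t ≥ 1`) with
`⟨S_t f⟩_{n+l,k,r} ≤ C t^l ⟨f⟩_{n,k+2l,r}` and
`⟨(S_t − id) f⟩_{n,k+2l,r} ≤ C t^{-l} ⟨f⟩_{n+l,k,r}`. -/
theorem smoothing_operators_flat (m : ℕ) (hm : 1 ≤ m) (r : ℝ) (hr : 0 < r) :
    ∃ S : ℝ → ((EuclideanSpace ℝ (Fin m) → ℝ) →ₗ[ℝ] (EuclideanSpace ℝ (Fin m) → ℝ)),
      (∀ t : ℝ, 1 ≤ t → ∀ f, FlatSmoothOnBall m r f → FlatSmoothOnBall m r (S t f)) ∧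
      ∀ n k l : ℕ, ∃ C > (0 : ℝ), ∀ f, FlatSmoothOnBall m r f → ∀ t : ℝ, 1 ≤ t →
        flatNorm m r (n + l) k (S t f) ≤ C * t ^ l * flatNorm m r n (k + 2 * l) f ∧
        flatNorm m r n (k + 2 * l) (S t f - f) ≤
          C * t ^ (-(l : ℤ)) * flatNorm m r (n + l) k f := by
  obtain ⟨b, hb⟩ := FlatSmoothing.exists_isMomentSequence
  obtain ⟨ρ, hρ⟩ := FlatSmoothing.exists_isAveragingKernel
    (MeasureTheory.volume (α := EuclideanSpace ℝ (Fin m))) hr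
  choose! S hS using fun t ht =>
    FlatSmoothing.exists_linearMap_eqOn_flatSmoothing (m := m) (t := t) hr hb hρ.contDiff ht
  refine ⟨S, fun t ht f hf => (hf.flatSmoothing hr hb hρ.contDiff ht).congr hr (hS t ht f hf),
    fun n k l => ?_⟩
  obtain ⟨C₁, hC₁, hbound⟩ := FlatSmoothing.exists_flatNorm_flatSmoothing_le hr hb hρ n k l
  obtain ⟨C₂, hC₂, happrox⟩ := FlatSmoothing.exists_flatNorm_flatSmoothing_sub_le hr hb hρ n k l
  refine ⟨C₁ + C₂ + 1, by positivity, fun f hf t ht => ?_⟩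
  have hsub : EqOn (S t f - f) (FlatSmoothing.flatSmoothing MeasureTheory.volume r ρ b t f - f)
      (closedBall 0 r) := fun x hx => congrArg (· - f x) (hS t ht f hf hx)
  have hnonneg (n k : ℕ) {s : ℝ} (hs : 0 ≤ s) : 0 ≤ s * flatNorm m r n k f :=
    mul_nonneg hs (FlatSmoothing.flatNorm_nonneg n k f)
  rw [FlatSmoothing.flatNorm_congr (hS t ht f hf), FlatSmoothing.flatNorm_congr hsub, mul_assoc,
    mul_assoc]
  exact ⟨(hbound f hf t ht).trans (mul_le_mul_of_nonneg_right (by linarith)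
      (hnonneg _ _ (by positivity))),
    (happrox f hf t ht).trans (mul_le_mul_of_nonneg_right (by linarith)
      (hnonneg _ _ (by positivity)))⟩
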